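/- For every natural number n with 2 ≤ n ≤ 5, there exists a positive real constant C_n such that N_n(B) is asymptotic to C_n · B · (log B)^(C(n,2) − 1) as B → ∞, where C(n,2) = n(n−1)/2 is the binomial coefficient; that is, N_n(B) / (B (log B)^(n(n−1)/2 − 1)) → C_n as B → ∞. -/

import Mathlib

/-- `f n r` is the number of subrings of `ℤ^n` (with identity `(1,…,1)`) of index `r`. -/
noncomputable def subringCount (n r : ℕ) : ℕ :=
  Nat.card {R : Subring (Fin n → ℤ) // R.toAddSubgroup.index = r}

/-- `N n B = ∑_{r ≤ B} f n r`. -/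
noncomputable def subringCountUpTo (n B : ℕ) : ℕ :=
  ∑ r ∈ Finset.Icc 1 B, subringCount n r

section

namespace SubringAsymp

abbrev V5 := Fin 5 → ℤ

lemma exists_pow_gen (p k : ℕ) (hp : p.Prime) (A : AddSubgroup ℤ) (h : ((p:ℤ)^k) ∈ A) :
    ∃ d ≤ k, ∀ c, c ∈ A ↔ (p:ℤ)^d ∣ c := by
  obtain ⟨g, hg⟩ := Int.subgroup_cyclic A
  rw [← AddSubgroup.zmultiples_eq_closure] at hg
  have hgk : g ∣ (p:ℤ)^k := by
    rw [hg] at h; exact Int.mem_zmultiples_iff.mp h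
  have h1 : g.natAbs ∣ p ^ k := by
    have := Int.natAbs_dvd_natAbs.mpr hgk
    simpa [Int.natAbs_pow] using this
  obtain ⟨d, hd, hd'⟩ := (Nat.dvd_prime_pow hp).mp h1
  refine ⟨d, hd, fun c => ?_⟩
  rw [hg, Int.mem_zmultiples_iff, ← Int.natAbs_dvd, hd']
  push_cast; rfl

def IsA (p : ℕ) (R : Subring V5) (a : Fin 5 → ℕ) : Prop :=
  ∀ j c, (∃ r ∈ R, (∀ i < j, r i = 0) ∧ r j = c) ↔ (p:ℤ)^(a j) ∣ c

def IsD (p : ℕ) (R : Subring V5) (d : Fin 5 → Fin 5 → ℕ) : Prop :=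
  (∀ i j, i ≠ j → ∀ c, (∃ r ∈ R, r i - r j = c) ↔ (p:ℤ)^(d i j) ∣ c) ∧ ∀ i, d i i = 0

lemma exists_isA (p k : ℕ) (hp : p.Prime) (R : Subring V5)
    (hR : ∀ v : V5, ((p:ℤ)^k) • v ∈ R) : ∃ a, IsA p R a ∧ ∀ j, a j ≤ k := by
  have : ∀ j : Fin 5, ∃ d ≤ k, ∀ c, (∃ r ∈ R, (∀ i < j, r i = 0) ∧ r j = c) ↔ (p:ℤ)^d ∣ c := by
    intro j
    let A : AddSubgroup ℤ :=
      { carrier := {c | ∃ r ∈ R, (∀ i < j, r i = 0) ∧ r j = c}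
        zero_mem' := ⟨0, R.zero_mem, by simp, by simp⟩
        add_mem' := by
          rintro a b ⟨r, hr, h1, h2⟩ ⟨r', hr', h1', h2'⟩
          exact ⟨r + r', R.add_mem hr hr', fun i hi => by simp [h1 i hi, h1' i hi], by simp [h2, h2']⟩
        neg_mem' := by
          rintro a ⟨r, hr, h1, h2⟩
          exact ⟨-r, R.neg_mem hr, fun i hi => by simp [h1 i hi], by simp [h2]⟩ }
    have hk : ((p:ℤ)^k) ∈ A := by
      refine ⟨((p:ℤ)^k) • Pi.single j 1, hR _, fun i hi => ?_, by simp⟩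
      simp [Pi.single_eq_of_ne hi.ne]
    exact exists_pow_gen p k hp A hk
  choose a ha hc using this
  exact ⟨a, hc, ha⟩

lemma exists_isD (p k : ℕ) (hp : p.Prime) (R : Subring V5)
    (hR : ∀ v : V5, ((p:ℤ)^k) • v ∈ R) : ∃ d, IsD p R d ∧ ∀ i j, d i j ≤ k := by
  have : ∀ i j : Fin 5, ∃ d ≤ k, (i ≠ j → ∀ c, (∃ r ∈ R, r i - r j = c) ↔ (p:ℤ)^d ∣ c) ∧
      (i = j → d = 0) := by
    intro i j
    by_cases hij : i = j
    · exact ⟨0, by simp, by simp [hij], by simp⟩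
    let A : AddSubgroup ℤ :=
      { carrier := {c | ∃ r ∈ R, r i - r j = c}
        zero_mem' := ⟨0, R.zero_mem, by simp⟩
        add_mem' := by
          rintro a b ⟨r, hr, h1⟩ ⟨r', hr', h1'⟩
          exact ⟨r + r', R.add_mem hr hr', by simp [← h1, ← h1']; ring⟩
        neg_mem' := by
          rintro a ⟨r, hr, h1⟩
          exact ⟨-r, R.neg_mem hr, by simp [← h1]; ring⟩ }
    have hk : ((p:ℤ)^k) ∈ A := by
      refine ⟨((p:ℤ)^k) • Pi.single i 1, hR _, ?_⟩
      simp [Ne.symm hij]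
    obtain ⟨d, hd, h⟩ := exists_pow_gen p k hp A hk
    exact ⟨d, hd, fun _ => h, fun h => absurd h hij⟩
  choose d hd h1 h2 using this
  exact ⟨d, ⟨h1, fun i => h2 i i rfl⟩, hd⟩

/-- approximate lattice: vectors agreeing with an element of `R` on coordinates `< j` -/
def lev (R : Subring V5) (j : ℕ) : Set V5 := {v | ∃ r ∈ R, ∀ l : Fin 5, (l:ℕ) < j → v l = r l}

noncomputable def gg (S : Set V5) (i : Fin 5) (q : ℤ) : V5 :=
  Classical.epsilon (fun g => g ∈ S ∧ (∀ l < i, g l = 0) ∧ g i = q)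

noncomputable def hh (R : Subring V5) (i j : Fin 5) (q : ℤ) : V5 :=
  Classical.epsilon (fun h => h ∈ R ∧ ∀ l < j, h l = gg (lev R j) i q l)

noncomputable def cc (p : ℕ) (a : Fin 5 → ℕ) (i j : Fin 5) (R : Subring V5) : ℤ :=
  hh R i j ((p:ℤ)^(a i)) j % (p:ℤ)^(a j)

section
variable {p : ℕ} {a : Fin 5 → ℕ} {R R' : Subring V5}

lemma hh_spec (hA : IsA p R a) {i j : Fin 5} (hij : i < j) :
    hh R i j ((p:ℤ)^(a i)) ∈ R ∧ ∀ l < j, hh R i j ((p:ℤ)^(a i)) l = gg (lev R j) i ((p:ℤ)^(a i)) l := by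
  have h1 : ∃ g, g ∈ lev R j ∧ (∀ l < i, g l = 0) ∧ g i = (p:ℤ)^(a i) := by
    obtain ⟨r, hr, h1, h2⟩ := (hA i ((p:ℤ)^(a i))).mpr dvd_rfl
    exact ⟨r, ⟨r, hr, fun _ _ => rfl⟩, h1, h2⟩
  have h2 := Classical.epsilon_spec h1
  obtain ⟨r, hr, h3⟩ := h2.1
  exact Classical.epsilon_spec (p := fun h => h ∈ R ∧ ∀ l < j, h l = gg (lev R j) i ((p:ℤ)^(a i)) l)
    ⟨r, hr, fun l hl => (h3 l hl).symm⟩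

lemma gg_spec (hA : IsA p R a) (i j : Fin 5) :
    (∀ l < i, gg (lev R j) i ((p:ℤ)^(a i)) l = 0) ∧ gg (lev R j) i ((p:ℤ)^(a i)) i = (p:ℤ)^(a i) := by
  have h1 : ∃ g, g ∈ lev R j ∧ (∀ l < i, g l = 0) ∧ g i = (p:ℤ)^(a i) := by
    obtain ⟨r, hr, h1, h2⟩ := (hA i ((p:ℤ)^(a i))).mpr dvd_rfl
    exact ⟨r, ⟨r, hr, fun _ _ => rfl⟩, h1, h2⟩
  exact (Classical.epsilon_spec h1).2

def Agree (R R' : Subring V5) (i : ℕ) (j : Fin 5) : Prop :=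
  ∀ v ∈ R, (∀ l : Fin 5, (l:ℕ) < i → v l = 0) → ∃ v' ∈ R', ∀ l ≤ j, v' l = v l

/-- a lift pair -/
structure Lift (p : ℕ) (a : Fin 5 → ℕ) (R R' : Subring V5) (i j : Fin 5) (h h' : V5) : Prop where
  m : h ∈ R
  m' : h' ∈ R'
  eq : ∀ l < j, h l = h' l
  z : ∀ l < i, h l = 0
  v : h i = (p:ℤ)^(a i)

lemma lift_hh (hA : IsA p R a) (hA' : IsA p R' a) {i j : Fin 5} (hij : i < j)
    (hS : lev R j = lev R' j) :
    Lift p a R R' i j (hh R i j ((p:ℤ)^(a i))) (hh R' i j ((p:ℤ)^(a i))) := by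
  have h1 := hh_spec hA hij
  have h2 := hh_spec hA' hij
  have h3 := gg_spec hA i j
  refine ⟨h1.1, h2.1, fun l hl => ?_, fun l hl => ?_, ?_⟩
  · rw [h1.2 l hl, h2.2 l hl, hS]
  · rw [h1.2 l (hl.trans hij), h3.1 l hl]
  · rw [h1.2 i hij, h3.2]

lemma agree_base (hA : IsA p R a) (hA' : IsA p R' a) (j : Fin 5) : Agree R R' j j := by
  intro v hv hz
  have h1 : (p:ℤ)^(a j) ∣ v j := (hA j _).mp ⟨v, hv, fun i hi => hz i hi, rfl⟩
  obtain ⟨r, hr, h2, h3⟩ := (hA' j _).mpr h1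
  refine ⟨r, hr, fun l hl => ?_⟩
  rcases hl.lt_or_eq with h | h
  · rw [h2 l h, hz l h]
  · rw [h, h3]

lemma agree_step (hA : IsA p R a) (hA' : IsA p R' a) {i j : Fin 5} (hij : i < j) {h h' : V5}
    (hl : Lift p a R R' i j h h') (hag : Agree R R' (i+1) j)
    (hc : (p:ℤ)^(a j) ∣ h j - h' j) : Agree R R' i j := by
  intro v hv hz
  obtain ⟨m, hm⟩ : (p:ℤ)^(a i) ∣ v i := (hA i _).mp ⟨v, hv, fun i hi => hz i hi, rfl⟩
  obtain ⟨v', hv', h1⟩ := hag (v - m • h) (R.sub_mem hv (R.zsmul_mem hl.m m)) (by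
    intro l hli
    rcases (Nat.lt_succ_iff.mp hli).lt_or_eq with h2 | h2
    · have h2' : l < i := h2
      simp [hz l h2, hl.z l h2']
    · have h2' : l = i := Fin.ext h2
      subst h2'
      simp [hl.v, hm]; ring)
  obtain ⟨r, hr, h2, h3⟩ := (hA' j (m * (h j - h' j))).mpr (hc.mul_left m)
  refine ⟨v' + m • h' + r, R'.add_mem (R'.add_mem hv' (R'.zsmul_mem hl.m' m)) hr, fun l hlj => ?_⟩
  rcases hlj.lt_or_eq with h4 | h4
  · simp [h1 l hlj, h2 l h4, hl.eq l h4]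
  · subst h4
    simp [h1 l le_rfl, h3]; ring

lemma agree_zero {j : Fin 5} (hag : Agree R R' 1 j) : Agree R R' 0 j := by
  intro v hv _
  obtain ⟨v', hv', h1⟩ := hag (v - (v 0) • 1) (R.sub_mem hv (R.zsmul_mem R.one_mem _)) (by
    intro l hl
    have : l = 0 := Fin.ext (by simpa using hl)
    subst this; simp)
  refine ⟨v' + (v 0) • 1, R'.add_mem hv' (R'.zsmul_mem R'.one_mem _), fun l hl => ?_⟩
  simp [h1 l hl]

lemma key0 (hA' : IsA p R' a) {i : ℕ} {j : Fin 5} (hag : Agree R R' i j) {u u' : V5}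
    (hu : u ∈ R) (hu' : u' ∈ R') (he : ∀ l < j, u l = u' l)
    (hz : ∀ l : Fin 5, (l:ℕ) < i → u l = 0) : (p:ℤ)^(a j) ∣ u j - u' j := by
  obtain ⟨v', hv', h1⟩ := hag u hu hz
  refine (hA' j _).mp ⟨v' - u', R'.sub_mem hv' hu', fun l hl => ?_, ?_⟩
  · simp [h1 l hl.le, he l hl]
  · simp [h1 j le_rfl]

lemma key1 (hA' : IsA p R' a) {i j : Fin 5} {h h' : V5} (hij : i < j)
    (hl : Lift p a R R' i j h h') (hag : Agree R R' (i+1) j) {x : V5} (hx : x ∈ R) (hx' : x ∈ R') :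
    (p:ℤ)^(a j) ∣ (x j - x i) * (h j - h' j) := by
  have := key0 hA' hag (u := (x - (x i) • 1) * h) (u' := (x - (x i) • 1) * h')
    (R.mul_mem (R.sub_mem hx (R.zsmul_mem R.one_mem _)) hl.m)
    (R'.mul_mem (R'.sub_mem hx' (R'.zsmul_mem R'.one_mem _)) hl.m')
    (fun l hlj => by simp [hl.eq l hlj])
    (fun l hli => by
      rcases (Nat.lt_succ_iff.mp hli).lt_or_eq with h2 | h2
      · have h2' : l < i := h2
        simp [hl.z l h2']
      · have h2' : l = i := Fin.ext h2
        subst h2'; simp)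
  convert this using 1
  simp; ring

lemma prod_mem {x : V5} (hx : x ∈ R) (s : Finset (Fin 5)) : ∏ l ∈ s, (x - (x l) • (1 : V5)) ∈ R :=
  R.prod_mem fun l _ => R.sub_mem hx (R.zsmul_mem R.one_mem _)

lemma key2 (hA' : IsA p R' a) {i j : Fin 5} {h h' : V5} (hij : i < j)
    (hl : Lift p a R R' i j h h') (hag : Agree R R' (i+1) j) {x : V5} (hx : x ∈ R) (hx' : x ∈ R')
    {B : ℤ} (hB : ∏ l ∈ Finset.Iio i, (x i - x l) = (p:ℤ)^(a i) * B) :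
    (p:ℤ)^(a j) ∣ B * (h j - h' j) := by
  have hP := prod_mem hx (Finset.Iio i)
  have hP' := prod_mem hx' (Finset.Iio i)
  set P : V5 := ∏ l ∈ Finset.Iio i, (x - (x l) • (1 : V5)) with hPdef
  have hz : ∀ l < i, P l = 0 := by
    intro l hli
    rw [hPdef, Finset.prod_apply]
    exact Finset.prod_eq_zero (Finset.mem_Iio.mpr hli) (by simp)
  have hv : P i = (p:ℤ)^(a i) * B := by
    rw [hPdef, Finset.prod_apply, ← hB]; simp
  have := key0 hA' hag (u := P - B • h) (u' := P - B • h')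
    (R.sub_mem hP (R.zsmul_mem hl.m _)) (R'.sub_mem hP' (R'.zsmul_mem hl.m' _))
    (fun l hlj => by simp [hl.eq l hlj])
    (fun l hli => by
      rcases (Nat.lt_succ_iff.mp hli).lt_or_eq with h2 | h2
      · have h2' : l < i := h2
        simp [hl.z l h2', hz l h2']
      · have h2' : l = i := Fin.ext h2
        subst h2'; simp [hl.v, hv]; ring)
  have e : (P - B • h) j - (P - B • h') j = -(B * (h j - h' j)) := by
    simp only [Pi.sub_apply, Pi.smul_apply, smul_eq_mul]; ring
  rw [e] at this
  exact (dvd_neg).mp this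

lemma lev_eq (j : Fin 5) (h : Agree R R' 0 j) (h' : Agree R' R 0 j) : lev R (j+1) = lev R' (j+1) := by
  ext v; constructor
  · rintro ⟨r, hr, h1⟩
    obtain ⟨r', hr', h2⟩ := h r hr (by simp)
    exact ⟨r', hr', fun l hl => by rw [h1 l hl, h2 l (Fin.le_def.mpr (by omega))]⟩
  · rintro ⟨r, hr, h1⟩
    obtain ⟨r', hr', h2⟩ := h' r hr (by simp)
    exact ⟨r', hr', fun l hl => by rw [h1 l hl, h2 l (Fin.le_def.mpr (by omega))]⟩

lemma lev_one : lev R 1 = Set.univ := by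
  ext v; simp only [Set.mem_univ, iff_true]
  refine ⟨(v 0) • 1, R.zsmul_mem R.one_mem _, fun l hl => ?_⟩
  have : l = 0 := Fin.ext (by simpa using hl)
  subst this; simp

lemma lev_five : lev R 5 = R := by
  ext v; constructor
  · rintro ⟨r, hr, h1⟩
    have : v = r := funext fun l => h1 l l.2
    rw [this]; exact hr
  · intro h; exact ⟨v, h, fun _ _ => rfl⟩

end
end SubringAsymp

end

section

namespace SubringAsymp

section
variable {p : ℕ} {a : Fin 5 → ℕ} {R R' : Subring V5}

lemma agree_of_cc (hA : IsA p R a) (hA' : IsA p R' a) {j : Fin 5}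
    (hS : lev R j = lev R' j) (t : ℕ) : ∀ n : ℕ, n + t = j →
    (∀ l : Fin 5, n ≤ l → l < j → cc p a l j R = cc p a l j R') → Agree R R' n j := by
  induction t with
  | zero => intro n hn _; rw [show n = j by omega]; exact agree_base hA hA' j
  | succ t ih =>
    intro n hn h
    have h1 : Agree R R' (n+1) j := ih (n+1) (by omega) (fun l hl hlj => h l (by omega) hlj)
    have hn5 : n < 5 := by omega
    have hlt : (⟨n, hn5⟩ : Fin 5) < j := Fin.lt_def.mpr (by simp; omega)
    exact agree_step hA hA' (i := ⟨n, hn5⟩) hlt (lift_hh hA hA' hlt hS) h1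
      (Int.ModEq.dvd (h ⟨n, hn5⟩ le_rfl hlt).symm)

lemma lev_succ (hA : IsA p R a) (hA' : IsA p R' a) {j : Fin 5} (hj : 1 ≤ (j:ℕ))
    (hS : lev R j = lev R' j)
    (h : ∀ l : Fin 5, 1 ≤ (l:ℕ) → l < j → cc p a l j R = cc p a l j R') :
    lev R (j+1) = lev R' (j+1) :=
  lev_eq j (agree_zero (agree_of_cc hA hA' hS (j-1) 1 (by omega) h))
    (agree_zero (agree_of_cc hA' hA hS.symm (j-1) 1 (by omega) fun l h1 h2 => (h l h1 h2).symm))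

lemma lev_two (hA : IsA p R a) (hA' : IsA p R' a) : lev R 2 = lev R' 2 :=
  lev_succ (j := 1) hA hA' (by simp) (by simp [lev_one]) (by
    intro l h1 h2; rw [Fin.lt_def] at h2; simp at h2; omega)

lemma dvd_cc {m : ℕ} {q : ℤ} {u v : ℤ} (h : q ∣ (m:ℤ) * (u - v)) : q ∣ (m:ℤ) * (u % q - v % q) := by
  have h1 : q ∣ u - u % q := Int.dvd_self_sub_emod
  have h2 : q ∣ v - v % q := Int.dvd_self_sub_emod
  have := dvd_sub h (dvd_sub (h1.mul_left m) (h2.mul_left m))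
  have e : (m:ℤ) * (u % q - v % q) =
      (m:ℤ) * (u - v) - ((m:ℤ) * (u - u % q) - (m:ℤ) * (v - v % q)) := by
    generalize u % q = u1
    generalize v % q = v1
    ring
  rw [e]; exact this

/-- `m` is a killing exponent for the pair `i,j`. -/
def Kill (p : ℕ) (a : Fin 5 → ℕ) (x : V5) (i j : Fin 5) (m : ℕ) : Prop :=
  ∀ z : ℤ, (p:ℤ)^(a j) ∣ (x j - x i) * z →
    (∀ B, ∏ l ∈ Finset.Iio i, (x i - x l) = (p:ℤ)^(a i) * B → (p:ℤ)^(a j) ∣ B * z) →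
    (p:ℤ)^(a j) ∣ (p:ℤ)^m * z

lemma piece (hA : IsA p R a) (hA' : IsA p R' a) {x : V5} (hx : x ∈ R) (hx' : x ∈ R') {i j : Fin 5}
    (hij : i < j) {m : ℕ} (hm : Kill p a x i j m) (hS : lev R j = lev R' j)
    (h : ∀ l : Fin 5, i < l → l < j → cc p a l j R = cc p a l j R') :
    (p:ℤ)^(a j) ∣ (p:ℤ)^m * (cc p a i j R - cc p a i j R') := by
  have hag := agree_of_cc hA hA' hS (j - (i+1)) (i+1)
    (by rw [Fin.lt_def] at hij; omega) (fun l hl hlj => h l (Fin.lt_def.mpr (by omega)) hlj)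
  have hl := lift_hh hA hA' hij hS
  have h1 := hm _ (key1 hA' hij hl hag hx hx') (fun B hB => key2 hA' hij hl hag hx hx' hB)
  have := dvd_cc (m := p^m) (by push_cast; exact h1)
  push_cast at this
  exact this

lemma cc_range (hp : 0 < p) (i j : Fin 5) (R : Subring V5) :
    0 ≤ cc p a i j R ∧ cc p a i j R < (p:ℤ)^(a j) := by
  have : (0:ℤ) < (p:ℤ)^(a j) := by positivity
  exact ⟨Int.emod_nonneg _ this.ne', Int.emod_lt_of_pos _ this⟩

lemma card_values (hp : 0 < p) (T : Finset ℤ) (α m : ℕ) (h1 : ∀ z ∈ T, 0 ≤ z ∧ z < (p:ℤ)^α)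
    (h2 : ∀ z ∈ T, ∀ z' ∈ T, (p:ℤ)^α ∣ (p:ℤ)^m * (z - z')) : T.card ≤ p^m := by
  have hp' : (0:ℤ) < p := by exact_mod_cast hp
  by_cases hm : α ≤ m
  · have : T ⊆ Finset.Ico 0 ((p:ℤ)^α) := fun z hz => Finset.mem_Ico.mpr (h1 z hz)
    calc T.card ≤ _ := Finset.card_le_card this
      _ = p^α := by rw [Int.card_Ico, sub_zero, ← Nat.cast_pow, Int.toNat_natCast]
      _ ≤ p^m := Nat.pow_le_pow_right hp hm
  · push Not at hm
    have hq : (0:ℤ) < (p:ℤ)^(α-m) := by positivity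
    have e : (p:ℤ)^α = (p:ℤ)^m * (p:ℤ)^(α-m) := by rw [← pow_add]; congr 1; omega
    have : T.card ≤ (Finset.Ico 0 ((p:ℤ)^m)).card := by
      refine Finset.card_le_card_of_injOn (fun z => z / (p:ℤ)^(α-m)) ?_ ?_
      · intro z hz
        have := h1 z hz
        simp only [Finset.coe_Ico, Set.mem_Ico]
        refine ⟨Int.ediv_nonneg this.1 hq.le, Int.ediv_lt_of_lt_mul hq ?_⟩
        rw [← e]; exact this.2
      · intro z hz z' hz' hzz
        simp only at hzz
        have h3 := h2 z hz z' hz'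
        rw [e] at h3
        have h4 : (p:ℤ)^(α-m) ∣ z - z' := (mul_dvd_mul_iff_left (by positivity)).mp h3
        have h5 : z % (p:ℤ)^(α-m) = z' % (p:ℤ)^(α-m) := (Int.emod_emod_of_dvd _ dvd_rfl ▸ (Int.emod_emod_of_dvd _ dvd_rfl).symm ▸ (Int.emod_eq_emod_iff_emod_sub_eq_zero.mpr (Int.emod_eq_zero_of_dvd h4)))
        rw [← Int.mul_ediv_add_emod z ((p:ℤ)^(α-m)), ← Int.mul_ediv_add_emod z' ((p:ℤ)^(α-m)), hzz, h5]
    rwa [Int.card_Ico, sub_zero, ← Nat.cast_pow, Int.toNat_natCast] at this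

lemma chain {α : Type*} (N : ℕ) (f : ℕ → α → ℤ) (n : ℕ → ℕ) (A : Finset α)
    (h : ∀ t < N, ∀ A' ⊆ A, (∀ a ∈ A', ∀ b ∈ A', ∀ s < t, f s a = f s b) → (A'.image (f t)).card ≤ n t)
    (inj : ∀ a ∈ A, ∀ b ∈ A, (∀ s < N, f s a = f s b) → a = b) :
    A.card ≤ ∏ t ∈ Finset.range N, n t := by
  classical
  have main : ∀ u ≤ N, ∀ A' ⊆ A, (∀ a ∈ A', ∀ b ∈ A', ∀ s < N - u, f s a = f s b) →
      A'.card ≤ ∏ t ∈ Finset.Ico (N-u) N, n t := by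
    intro u
    induction u with
    | zero =>
      intro _ A' hA' hh
      simp only [Nat.sub_zero, Finset.Ico_self, Finset.prod_empty]
      exact Finset.card_le_one.mpr fun a ha b hb => inj a (hA' ha) b (hA' hb) (hh a ha b hb)
    | succ u ih =>
      intro hu A' hA' hh
      have h1 := h (N-(u+1)) (by omega) A' hA' hh
      have h2 : ∀ b ∈ A'.image (f (N-(u+1))), (A'.filter (fun x => f (N-(u+1)) x = b)).card ≤
          ∏ t ∈ Finset.Ico (N-u) N, n t := by
        intro b _
        refine ih (by omega) _ ((Finset.filter_subset _ _).trans hA') ?_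
        intro x hx y hy s hs
        rw [Finset.mem_filter] at hx hy
        rcases (show s < N - (u+1) ∨ s = N-(u+1) by omega) with h3 | h3
        · exact hh x hx.1 y hy.1 s h3
        · rw [h3, hx.2, hy.2]
      calc A'.card ≤ _ * _ := Finset.card_le_mul_card_image A' _ h2
        _ ≤ (∏ t ∈ Finset.Ico (N-u) N, n t) * n (N-(u+1)) := Nat.mul_le_mul_left _ h1
        _ = _ := by
          rw [Finset.prod_eq_prod_Ico_succ_bot (show N-(u+1) < N by omega) n,
            show N - (u+1) + 1 = N - u by omega, mul_comm]
  have := main N le_rfl A subset_rfl (by simp)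
  simpa using this

/-- the ordered list of pairs -/
def pr : ℕ → Fin 5 × Fin 5
  | 0 => (1,2)
  | 1 => (2,3)
  | 2 => (1,3)
  | 3 => (3,4)
  | 4 => (2,4)
  | _ => (1,4)

noncomputable def ff (p : ℕ) (a : Fin 5 → ℕ) (t : ℕ) (R : Subring V5) : ℤ :=
  cc p a (pr t).1 (pr t).2 R

lemma lev_of_ff (hA : IsA p R a) (hA' : IsA p R' a) :
    lev R 2 = lev R' 2 ∧ (ff p a 0 R = ff p a 0 R' → lev R 3 = lev R' 3 ∧
      (ff p a 1 R = ff p a 1 R' → ff p a 2 R = ff p a 2 R' → lev R 4 = lev R' 4 ∧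
      (ff p a 3 R = ff p a 3 R' → ff p a 4 R = ff p a 4 R' → ff p a 5 R = ff p a 5 R' → R = R'))) := by
  have h2 := lev_two hA hA'
  refine ⟨h2, fun f0 => ?_⟩
  have h3 : lev R 3 = lev R' 3 := lev_succ (j := 2) hA hA' (by simp) h2 (by
    intro l h1 h2
    have : l = 1 := by
      rw [Fin.lt_def] at h2; ext; simp at h2 ⊢; omega
    subst this; exact f0)
  refine ⟨h3, fun f1 f2 => ?_⟩
  have h4 : lev R 4 = lev R' 4 := lev_succ (j := 3) hA hA' (by simp) h3 (by
    intro l h1 h2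
    have : l = 1 ∨ l = 2 := by
      rw [Fin.lt_def] at h2; simp only [Fin.ext_iff]; simp at h2 ⊢; omega
    rcases this with rfl | rfl
    exacts [f2, f1])
  refine ⟨h4, fun f3 f4 f5 => ?_⟩
  have h5 : lev R 5 = lev R' 5 := lev_succ (j := 4) hA hA' (by simp) h4 (by
    intro l h1 h2
    have : l = 1 ∨ l = 2 ∨ l = 3 := by
      rw [Fin.lt_def] at h2; simp only [Fin.ext_iff]; simp at h2 ⊢; omega
    rcases this with rfl | rfl | rfl
    exacts [f5, f4, f3])
  rw [lev_five, lev_five] at h5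
  exact SetLike.coe_injective h5

/-- difference of the `t`-th invariants killed by `p^(m t)` if previous invariants agree -/
lemma ff_dvd (hA : IsA p R a) (hA' : IsA p R' a) {x : V5} (hx : x ∈ R) (hx' : x ∈ R') {t : ℕ}
    (ht : t < 6) {m : ℕ} (hm : Kill p a x (pr t).1 (pr t).2 m)
    (h : ∀ s < t, ff p a s R = ff p a s R') :
    (p:ℤ)^(a (pr t).2) ∣ (p:ℤ)^m * (ff p a t R - ff p a t R') := by
  obtain ⟨h2, h3'⟩ := lev_of_ff hA hA'
  interval_cases t
  · exact piece hA hA' hx hx' (by decide) hm h2 (fun l h1 h2 => absurd (lt_of_lt_of_le h1 (Fin.le_def.mpr (show (l:ℕ) ≤ 1 from Nat.lt_succ_iff.mp h2))) (lt_irrefl _))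
  · obtain ⟨h3, h4'⟩ := h3' (h 0 (by simp))
    exact piece hA hA' hx hx' (by decide) hm h3 (fun l h1 h2 => absurd (lt_of_lt_of_le h1 (Fin.le_def.mpr (show (l:ℕ) ≤ 2 from Nat.lt_succ_iff.mp h2))) (lt_irrefl _))
  · obtain ⟨h3, h4'⟩ := h3' (h 0 (by simp))
    refine piece hA hA' hx hx' (by decide) hm h3 ?_
    intro l h1 h2
    have : l = 2 := by decide +revert
    subst this; exact h 1 (by simp)
  all_goals
    obtain ⟨h3, h4'⟩ := h3' (h 0 (by simp))
    obtain ⟨h4, h5'⟩ := h4' (h 1 (by simp)) (h 2 (by simp))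
    refine piece hA hA' hx hx' (by decide) hm h4 ?_
    intro l h1 h2
  · exact absurd (lt_of_lt_of_le h1 (Fin.le_def.mpr (show (l:ℕ) ≤ 3 from Nat.lt_succ_iff.mp h2))) (lt_irrefl _)
  · have : l = 3 := by decide +revert
    subst this; exact h 3 (by simp)
  · have : l = 2 ∨ l = 3 := by decide +revert
    rcases this with rfl | rfl
    exacts [h 4 (by simp), h 3 (by simp)]

end
end SubringAsymp

end

section

namespace SubringAsymp

section
variable {p : ℕ} {a : Fin 5 → ℕ} {R R' : Subring V5} {d : Fin 5 → Fin 5 → ℕ}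

/-- valuation of `y` at most `m` -/
def NV (p m : ℕ) (y : ℤ) : Prop := ∃ v ≤ m, ∃ u : ℤ, y = (p:ℤ)^v * u ∧ ¬ (p:ℤ) ∣ u

lemma nv_of_not_dvd {m : ℕ} {y : ℤ} (h : ¬ (p:ℤ)^(m+1) ∣ y) : NV p m y := by
  induction m with
  | zero => exact ⟨0, le_rfl, y, by simp, by simpa using h⟩
  | succ m ih =>
    by_cases h1 : (p:ℤ)^(m+1) ∣ y
    · obtain ⟨u, hu⟩ := h1
      refine ⟨m+1, le_rfl, u, hu, ?_⟩
      rintro ⟨w, rfl⟩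
      exact h ⟨w, by rw [hu]; ring⟩
    · obtain ⟨v, hv, u, h2⟩ := ih h1
      exact ⟨v, by omega, u, h2⟩

lemma nv_prod (hp : p.Prime) {ι : Type*} (S : Finset ι) (m : ι → ℕ) (y : ι → ℤ)
    (h : ∀ l ∈ S, NV p (m l) (y l)) : NV p (∑ l ∈ S, m l) (∏ l ∈ S, y l) := by
  classical
  induction S using Finset.induction_on with
  | empty => exact ⟨0, le_rfl, 1, by simp, fun h => by
      have := Int.isUnit_iff.mp (isUnit_of_dvd_one h)
      have h2 := hp.two_le
      omega⟩
  | insert i S hi ih =>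
    rw [Finset.sum_insert hi, Finset.prod_insert hi]
    obtain ⟨v, hv, u, h1, h2⟩ := h i (Finset.mem_insert_self _ _)
    obtain ⟨v', hv', u', h1', h2'⟩ := ih (fun l hl => h l (Finset.mem_insert_of_mem hl))
    refine ⟨v + v', by omega, u * u', by rw [h1, h1']; ring, fun h3 => ?_⟩
    rcases (Nat.prime_iff_prime_int.mp hp).dvd_or_dvd h3 with h | h
    exacts [h2 h, h2' h]

lemma nv_kill (hp : p.Prime) {α m : ℕ} {y z : ℤ} (h : NV p m y) (hd : (p:ℤ)^α ∣ y * z) :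
    (p:ℤ)^α ∣ (p:ℤ)^m * z := by
  obtain ⟨v, hv, u, rfl, hu⟩ := h
  have hc : IsCoprime ((p:ℤ)^α) u :=
    (((Nat.prime_iff_prime_int.mp hp).coprime_iff_not_dvd).mpr hu).pow_left
  have : (p:ℤ)^α ∣ (p:ℤ)^v * z := by
    apply hc.dvd_of_dvd_mul_left
    rwa [show u * ((p:ℤ)^v * z) = (p:ℤ)^v * u * z by ring]
  obtain ⟨t, rfl⟩ := Nat.exists_eq_add_of_le hv
  rw [show (p:ℤ)^(v+t) * z = (p:ℤ)^t * ((p:ℤ)^v * z) by ring]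
  exact this.mul_left _

/-- Goodness -/
def Good (p s : ℕ) (d : Fin 5 → Fin 5 → ℕ) (x : V5) : Prop :=
  ∀ i j, i < j → ¬ (p:ℤ)^(d i j + s + 1) ∣ x i - x j

def DD (d : Fin 5 → Fin 5 → ℕ) (j : Fin 5) : ℕ := ∑ l ∈ Finset.Iio j, d l j

lemma kill1 (hp : p.Prime) {s : ℕ} {x : V5} (hx : Good p s d x) {i j : Fin 5} (hij : i < j) :
    Kill p a x i j (d i j + s) := by
  intro z h1 _
  have h2 := nv_of_not_dvd (hx i j hij)
  refine nv_kill hp h2 ?_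
  have := (dvd_neg).mpr h1
  rwa [show -((x j - x i) * z) = (x i - x j) * z by ring] at this

lemma kill2 (hp : p.Prime) {s : ℕ} {x : V5} (hx : Good p s d x) (hA : IsA p R a) (hxR : x ∈ R)
    {i j : Fin 5} : Kill p a x i j (DD d i + (i:ℕ) * s - a i) := by
  intro z _ h2
  have hP := prod_mem hxR (Finset.Iio i)
  have h3 : (p:ℤ)^(a i) ∣ ∏ l ∈ Finset.Iio i, (x i - x l) := by
    refine (hA i _).mp ⟨_, hP, fun l hl => ?_, ?_⟩
    · rw [Finset.prod_apply]
      exact Finset.prod_eq_zero (Finset.mem_Iio.mpr hl) (by simp)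
    · rw [Finset.prod_apply]; simp
  have h4 : NV p (∑ l ∈ Finset.Iio i, (d l i + s)) (∏ l ∈ Finset.Iio i, (x i - x l)) := by
    refine nv_prod hp _ _ _ fun l hl => nv_of_not_dvd ?_
    have := hx l i (Finset.mem_Iio.mp hl)
    rwa [← dvd_neg, neg_sub] at this
  rw [Finset.sum_add_distrib, Finset.sum_const, Fin.card_Iio, smul_eq_mul] at h4
  obtain ⟨B, hB⟩ := h3
  refine nv_kill hp ?_ (h2 B hB)
  obtain ⟨v, hv, u, h5, h6⟩ := h4
  have hp0 : (p:ℤ) ≠ 0 := by exact_mod_cast hp.ne_zero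
  have hle : a i ≤ v := by
    by_contra hlt
    push Not at hlt
    obtain ⟨t, ht⟩ := Nat.exists_eq_add_of_lt hlt
    rw [h5, ht] at hB
    apply h6
    refine ⟨(p:ℤ)^t * B, mul_left_cancel₀ (pow_ne_zero v hp0) ?_⟩
    rw [hB]; ring
  obtain ⟨t, rfl⟩ := Nat.exists_eq_add_of_le hle
  refine ⟨t, by simp only [DD]; omega, u, mul_left_cancel₀ (pow_ne_zero (a i) hp0) ?_, h6⟩
  rw [← hB, h5]; ring

lemma d_le_a (hp : p.Prime) (hA : IsA p R a) (hD : IsD p R d) {l j : Fin 5} (h : l < j) : d l j ≤ a j := by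
  obtain ⟨r, hr, h1, h2⟩ := (hA j _).mpr dvd_rfl
  have h3 := (hD.1 l j h.ne (r l - r j)).mp ⟨r, hr, rfl⟩
  rw [h1 l h, h2, zero_sub, dvd_neg] at h3
  exact (Nat.pow_dvd_pow_iff_le_right hp.one_lt).mp (by exact_mod_cast h3)

lemma d_symm (hp : p.Prime) (hD : IsD p R d) (i j : Fin 5) : d i j = d j i := by
  by_cases h : i = j
  · rw [h]
  have : ∀ i j : Fin 5, i ≠ j → d j i ≤ d i j := by
    intro i j hij
    obtain ⟨r, hr, h1⟩ := (hD.1 i j hij _).mpr dvd_rfl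
    have h2 := (hD.1 j i hij.symm _).mp ⟨r, hr, rfl⟩
    rw [← neg_sub, dvd_neg, h1] at h2
    exact (Nat.pow_dvd_pow_iff_le_right hp.one_lt).mp (by exact_mod_cast h2)
  exact le_antisymm (this j i (Ne.symm h)) (this i j h)

lemma d_ultra (hp : p.Prime) (hD : IsD p R d) {i j l : Fin 5} (hij : i ≠ j) (hjl : j ≠ l) (hil : i ≠ l) :
    min (d i j) (d j l) ≤ d i l := by
  obtain ⟨r, hr, h1⟩ := (hD.1 i l hil _).mpr dvd_rfl
  have h2 := (hD.1 i j hij _).mp ⟨r, hr, rfl⟩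
  have h3 := (hD.1 j l hjl _).mp ⟨r, hr, rfl⟩
  have h4 : (p:ℤ)^(min (d i j) (d j l)) ∣ (p:ℤ)^(d i l) := by
    rw [← h1, show r i - r l = (r i - r j) + (r j - r l) by ring]
    exact dvd_add ((pow_dvd_pow _ (min_le_left _ _)).trans h2) ((pow_dvd_pow _ (min_le_right _ _)).trans h3)
  exact (Nat.pow_dvd_pow_iff_le_right hp.one_lt).mp (by exact_mod_cast h4)

lemma a_le_DD (hp : p.Prime) (hA : IsA p R a) (hD : IsD p R d) (j : Fin 5) : a j ≤ DD d j := by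
  have : ∀ l : Fin 5, ∃ r : V5, l < j → r ∈ R ∧ r j - r l = (p:ℤ)^(d l j) := by
    intro l
    by_cases h : l < j
    · obtain ⟨r, hr, h1⟩ := (hD.1 j l h.ne' ((p:ℤ)^(d l j))).mpr (by rw [d_symm hp hD])
      exact ⟨r, fun _ => ⟨hr, h1⟩⟩
    · exact ⟨0, fun h' => absurd h' h⟩
  choose y hy using this
  have h3 : (p:ℤ)^(a j) ∣ (p:ℤ)^(DD d j) := by
    refine (hA j _).mp ⟨∏ l ∈ Finset.Iio j, (y l - (y l l) • (1 : V5)), ?_, fun l hl => ?_, ?_⟩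
    · exact R.prod_mem fun l hl =>
        R.sub_mem (hy l (Finset.mem_Iio.mp hl)).1 (R.zsmul_mem R.one_mem _)
    · rw [Finset.prod_apply]
      exact Finset.prod_eq_zero (Finset.mem_Iio.mpr hl) (by simp)
    · rw [Finset.prod_apply, DD, ← Finset.prod_pow_eq_pow_sum]
      refine Finset.prod_congr rfl fun l hl => ?_
      simpa using (hy l (Finset.mem_Iio.mp hl)).2
  exact (Nat.pow_dvd_pow_iff_le_right hp.one_lt).mp (by exact_mod_cast h3)

lemma box_reduce (hp : p.Prime) (hA : IsA p R a) (n : ℕ) (hn : n ≤ 5) (v : V5) :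
    ∃ r ∈ R, ∀ l : Fin 5, (l:ℕ) < n → 0 ≤ (v - r) l ∧ (v - r) l < (p:ℤ)^(a l) := by
  induction n with
  | zero => exact ⟨0, R.zero_mem, by simp⟩
  | succ n ih =>
    obtain ⟨r, hr, h1⟩ := ih (by omega)
    let j : Fin 5 := ⟨n, by omega⟩
    have hq : (0:ℤ) < (p:ℤ)^(a j) := pow_pos (by exact_mod_cast hp.pos) _
    obtain ⟨g, hg, h2, h3⟩ := (hA j _).mpr (dvd_refl ((p:ℤ)^(a j)))
    refine ⟨r + ((v - r) j / (p:ℤ)^(a j)) • g, R.add_mem hr (R.zsmul_mem hg _), fun l hl => ?_⟩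
    rcases (Nat.lt_succ_iff.mp hl).lt_or_eq with h4 | h4
    · have : g l = 0 := h2 l (Fin.lt_def.mpr h4)
      have := h1 l h4
      simp_all
    · have h5 : l = j := Fin.ext h4
      subst h5
      have e : (v - (r + ((v - r) j / (p:ℤ)^(a j)) • g)) j = (v - r) j % (p:ℤ)^(a j) := by
        have := Int.mul_ediv_add_emod ((v - r) j) ((p:ℤ)^(a j))
        simp only [Pi.sub_apply, Pi.add_apply, Pi.smul_apply, smul_eq_mul, h3] at this ⊢
        linear_combination -this
      rw [e]
      exact ⟨Int.emod_nonneg _ hq.ne', Int.emod_lt_of_pos _ hq⟩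

lemma index_le (hp : p.Prime) (hA : IsA p R a) {k : ℕ} (hk : R.toAddSubgroup.index = p^k) :
    k ≤ ∑ j, a j := by
  have h1 : R.toAddSubgroup.index ≤ ∏ j, p^(a j) := by
    rw [AddSubgroup.index]
    have : ∏ j, p^(a j) = Nat.card (∀ j : Fin 5, Fin (p^(a j))) := by
      rw [Nat.card_pi]; simp
    rw [this]
    refine Nat.card_le_card_of_surjective
      (fun w : (∀ j : Fin 5, Fin (p^(a j))) =>
        ((fun j => ((w j : ℕ) : ℤ) : V5) : V5 ⧸ R.toAddSubgroup)) ?_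
    intro q
    obtain ⟨v, rfl⟩ := QuotientAddGroup.mk_surjective q
    obtain ⟨r, hr, h⟩ := box_reduce hp hA 5 le_rfl v
    have h' : ∀ j : Fin 5, ((v - r) j).toNat < p^(a j) := by
      intro j
      have := h j j.2
      zify
      rw [Int.toNat_of_nonneg this.1]; exact this.2
    refine ⟨fun j => ⟨((v - r) j).toNat, h' j⟩, ?_⟩
    refine QuotientAddGroup.eq.mpr ?_
    have e : (-(fun j => ((((v - r) j).toNat : ℕ) : ℤ)) + v : V5) = r := by
      ext j
      simp only [Pi.add_apply, Pi.neg_apply]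
      rw [Int.toNat_of_nonneg (h j j.2).1]
      simp
    change (-(fun j => ((((v - r) j).toNat : ℕ) : ℤ)) + v : V5) ∈ R
    rw [e]; exact hr
  rw [hk, Finset.prod_pow_eq_pow_sum] at h1
  exact (Nat.pow_le_pow_iff_right hp.one_lt).mp h1

/-- counting with a fixed common element -/
lemma count (hp : p.Prime) {x : V5} (A : Finset (Subring V5)) (hA : ∀ R ∈ A, IsA p R a)
    (hx : ∀ R ∈ A, x ∈ R) (m : ℕ → ℕ)
    (hm : ∀ t < 6, Kill p a x (pr t).1 (pr t).2 (m t) ∨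
      ∀ R ∈ A, ∀ R' ∈ A, (∀ s < t, ff p a s R = ff p a s R') → ff p a t R = ff p a t R') :
    A.card ≤ p ^ (∑ t ∈ Finset.range 6, m t) := by
  classical
  rw [← Finset.prod_pow_eq_pow_sum]
  refine chain 6 (ff p a) (fun t => p^(m t)) A ?_ ?_
  · intro t ht A' hA' hag
    rcases hm t ht with h | h
    · refine card_values hp.pos _ (a (pr t).2) (m t) ?_ ?_
      · intro z hz
        obtain ⟨R, hR, rfl⟩ := Finset.mem_image.mp hz
        exact cc_range hp.pos _ _ _
      · intro z hz z' hz'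
        obtain ⟨R, hR, rfl⟩ := Finset.mem_image.mp hz
        obtain ⟨R', hR', rfl⟩ := Finset.mem_image.mp hz'
        exact ff_dvd (hA R (hA' hR)) (hA R' (hA' hR')) (hx R (hA' hR)) (hx R' (hA' hR')) ht h
          (hag R hR R' hR')
    · refine le_trans (Finset.card_le_one.mpr ?_) (Nat.one_le_pow _ _ hp.pos)
      intro z hz z' hz'
      obtain ⟨R, hR, rfl⟩ := Finset.mem_image.mp hz
      obtain ⟨R', hR', rfl⟩ := Finset.mem_image.mp hz'
      exact h R (hA' hR) R' (hA' hR') (hag R hR R' hR')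
  · intro R hR R' hR' h
    obtain ⟨_, h1⟩ := lev_of_ff (hA R hR) (hA R' hR')
    exact (((h1 (h 0 (by simp))).2 (h 1 (by simp)) (h 2 (by simp))).2) (h 3 (by simp)) (h 4 (by simp)) (h 5 (by simp))

end
end SubringAsymp

end

section

namespace SubringAsymp

section
variable {p : ℕ} {a : Fin 5 → ℕ} {R R' : Subring V5} {d : Fin 5 → Fin 5 → ℕ}

lemma Kill.mono {x : V5} {i j : Fin 5} {m m' : ℕ} (h : Kill p a x i j m) (hm : m ≤ m') :
    Kill p a x i j m' := by
  intro z h1 h2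
  exact (h z h1 h2).trans (mul_dvd_mul_right (pow_dvd_pow _ hm) _)

def wt (d : Fin 5 → Fin 5 → ℕ) : ℕ :=
  d 0 1 + max (d 0 2) (d 1 2) + max (d 0 3) (max (d 1 3) (d 2 3)) +
    max (d 0 4) (max (d 1 4) (max (d 2 4) (d 3 4)))

lemma DD_one : DD d 1 = d 0 1 := by
  rw [DD, show Finset.Iio (1 : Fin 5) = {0} by decide]; simp
lemma DD_two : DD d 2 = d 0 2 + d 1 2 := by
  rw [DD, show Finset.Iio (2 : Fin 5) = {0, 1} by decide]; simp
lemma DD_three : DD d 3 = d 0 3 + d 1 3 + d 2 3 := by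
  rw [DD, show Finset.Iio (3 : Fin 5) = {0, 1, 2} by decide]; simp; ring
lemma DD_four : DD d 4 = d 0 4 + d 1 4 + d 2 4 + d 3 4 := by
  rw [DD, show Finset.Iio (4 : Fin 5) = {0, 1, 2, 3} by decide]; simp; ring
lemma DD_zero : DD d 0 = 0 := by
  rw [DD, show Finset.Iio (0 : Fin 5) = ∅ by decide]; simp

structure Fam (p k s : ℕ) (d : Fin 5 → Fin 5 → ℕ) (a : Fin 5 → ℕ) (A : Finset (Subring V5)) (x : V5) :
    Prop where
  hp : p.Prime
  hA : ∀ R ∈ A, IsA p R a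
  hD : ∀ R ∈ A, IsD p R d
  hk : ∀ R ∈ A, R.toAddSubgroup.index = p^k
  hx : ∀ R ∈ A, x ∈ R
  good : Good p s d x
  srt : ∀ i j, d i j ≤ d 0 3

lemma fix_gen {k s : ℕ} {A : Finset (Subring V5)} {x : V5} (F : Fam p k s d a A x) :
    A.card * p^(d 0 3) ≤ p^(wt d + 8 * s) := by
  rcases A.eq_empty_or_nonempty with rfl | ⟨R, hR⟩
  · simp
  have hp := F.hp
  have hA := F.hA R hR
  have hD := F.hD R hR
  let m : ℕ → ℕ := fun t => match t with
    | 0 => s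
    | 1 => min (d 0 2) (d 1 2) + 2 * s
    | 2 => s
    | 3 => d 3 4 + s
    | 4 => min (d 0 2) (d 1 2) + 2 * s
    | _ => s
  have e1 := d_le_a hp hA hD (l := 0) (j := 1) (by decide)
  have e2 := d_le_a hp hA hD (l := 0) (j := 2) (by decide)
  have e3 := d_le_a hp hA hD (l := 1) (j := 2) (by decide)
  have k1 : ∀ j, Kill p a x 1 j s := fun j => (kill2 hp F.good hA (F.hx R hR)).mono (by
    rw [DD_one]; simp; omega)
  have k2 : ∀ j, Kill p a x 2 j (min (d 0 2) (d 1 2) + 2 * s) := fun j =>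
    (kill2 hp F.good hA (F.hx R hR)).mono (by rw [DD_two]; simp; omega)
  have k3 : Kill p a x 3 4 (d 3 4 + s) := kill1 hp F.good (by decide)
  have := count hp A F.hA F.hx m (by
    intro t ht
    left
    interval_cases t
    exacts [k1 2, k2 3, k1 3, k3, k2 4, k1 4])
  have hu : min (d 0 2) (d 1 2) ≤ d 0 1 := by
    have := d_ultra hp hD (i := 0) (j := 2) (l := 1) (by decide) (by decide) (by decide)
    rwa [d_symm hp hD 2 1] at this
  have e : ∑ t ∈ Finset.range 6, m t + d 0 3 ≤ wt d + 8 * s := by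
    simp only [Finset.sum_range_succ, Finset.sum_range_zero, m, wt]
    omega
  calc A.card * p^(d 0 3) ≤ p ^ (∑ t ∈ Finset.range 6, m t) * p^(d 0 3) := Nat.mul_le_mul_right _ this
    _ = p ^ (∑ t ∈ Finset.range 6, m t + d 0 3) := by rw [pow_add]
    _ ≤ _ := Nat.pow_le_pow_right hp.pos e

lemma hh_zero (hA : IsA p R a) {i j : Fin 5} (hij : i < j) :
    (∀ l < i, hh R i j ((p:ℤ)^(a i)) l = 0) ∧ hh R i j ((p:ℤ)^(a i)) i = (p:ℤ)^(a i) := by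
  have h := lift_hh hA hA hij rfl
  exact ⟨h.z, h.v⟩

lemma special {k : ℕ} {A : Finset (Subring V5)} {x : V5} (F : Fam p k 0 d a A x)
    (h1 : ∀ i j, i < j → d i j = 1) (a1 : a 1 = 1) (a2 : a 2 = 1) (a3 : a 3 = 2) :
    A.card ≤ 2 * p^2 := by
  classical
  rcases A.eq_empty_or_nonempty with rfl | ⟨R0, hR0⟩
  · simp
  have hp := F.hp
  have hpi := Nat.prime_iff_prime_int.mp hp
  have hp0 : (p:ℤ) ≠ 0 := by exact_mod_cast hp.ne_zero
  have hunit : ∀ i j, i < j → ∃ u : ℤ, x i - x j = p * u ∧ ¬ (p:ℤ) ∣ u := by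
    intro i j hij
    obtain ⟨u, hu⟩ := ((F.hD R0 hR0).1 i j hij.ne _).mp ⟨x, F.hx R0 hR0, rfl⟩
    rw [h1 i j hij, pow_one] at hu
    refine ⟨u, hu, ?_⟩
    rintro ⟨w, rfl⟩
    apply F.good i j hij
    rw [h1 i j hij]
    exact ⟨w, by rw [hu]; ring⟩
  obtain ⟨u02, h02, n02⟩ := hunit 0 2 (by decide)
  obtain ⟨u12, h12, n12⟩ := hunit 1 2 (by decide)
  obtain ⟨u03, h03, n03⟩ := hunit 0 3 (by decide)
  obtain ⟨u13, h13, n13⟩ := hunit 1 3 (by decide)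
  obtain ⟨β, hβ, nβ⟩ := hunit 2 4 (by decide)
  obtain ⟨ε, hε, nε⟩ := hunit 3 4 (by decide)
  set α := u02 * u12 with hα
  set δ := u03 * u13 with hδ
  have nα : ¬ (p:ℤ) ∣ α := fun h => (hpi.dvd_or_dvd h).elim n02 n12
  let K : Subring V5 → Prop := fun R => ∀ r ∈ R, r 0 = 0 → r 1 = 0 → r 2 = p →
    (p:ℤ)^2 ∣ β * δ * p - α * ε * r 3
  have k1 : ∀ j, Kill p a x 1 j 0 := fun j => (kill2 hp F.good (F.hA R0 hR0) (F.hx R0 hR0)).mono (by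
    rw [DD_one, a1, h1 0 1 (by decide)]; simp)
  have kk : ∀ i j, i < j → Kill p a x i j 1 := fun i j hij => (kill1 hp F.good hij).mono (by
    rw [h1 i j hij])
  -- first half
  have c1 : (A.filter K).card ≤ p^2 := by
    have := count (a := a) hp (A.filter K) (fun R hR => F.hA R (Finset.mem_filter.mp hR).1)
      (fun R hR => F.hx R (Finset.mem_filter.mp hR).1)
      (fun t => match t with
        | 3 => 1
        | 4 => 1
        | _ => 0) (by
      intro t ht
      interval_cases t
      · exact Or.inl (k1 2)
      · right
        intro R hR R' hR' _
        rw [Finset.mem_filter] at hR hR'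
        have z := hh_zero (F.hA R hR.1) (i := 2) (j := 3) (by decide)
        have z' := hh_zero (F.hA R' hR'.1) (i := 2) (j := 3) (by decide)
        have s := hh_spec (F.hA R hR.1) (i := 2) (j := 3) (by decide)
        have s' := hh_spec (F.hA R' hR'.1) (i := 2) (j := 3) (by decide)
        have q := hR.2 _ s.1 (z.1 0 (by decide)) (z.1 1 (by decide)) (by rw [z.2, a2, pow_one])
        have q' := hR'.2 _ s'.1 (z'.1 0 (by decide)) (z'.1 1 (by decide)) (by rw [z'.2, a2, pow_one])
        have q2 := dvd_sub q' q
        change hh R 2 3 ((p:ℤ)^(a 2)) 3 % (p:ℤ)^(a 3) = hh R' 2 3 ((p:ℤ)^(a 2)) 3 % (p:ℤ)^(a 3)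
        rw [a3]
        apply Int.ModEq.symm
        apply (Int.modEq_iff_dvd).mpr
        generalize hh R 2 3 ((p:ℤ)^(a 2)) 3 = y at *
        generalize hh R' 2 3 ((p:ℤ)^(a 2)) 3 = y' at *
        have hc : IsCoprime ((p:ℤ)^2) (α * ε) := by
          refine ((hpi.coprime_iff_not_dvd).mpr fun h => ?_).pow_left
          exact (hpi.dvd_or_dvd h).elim nα nε
        apply hc.dvd_of_dvd_mul_left
        rwa [show α * ε * (y - y') = β * δ * p - α * ε * y' - (β * δ * p - α * ε * y) by ring]
      · exact Or.inl (k1 3)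
      · exact Or.inl (kk 3 4 (by decide))
      · exact Or.inl (kk 2 4 (by decide))
      · exact Or.inl (k1 4))
    simpa [Finset.sum_range_succ] using this
  have c2 : (A.filter (fun R => ¬ K R)).card ≤ p^2 := by
    have := count (a := a) hp (A.filter (fun R => ¬ K R)) (fun R hR => F.hA R (Finset.mem_filter.mp hR).1)
      (fun R hR => F.hx R (Finset.mem_filter.mp hR).1)
      (fun t => match t with
        | 1 => 1
        | 4 => 1
        | _ => 0) (by
      intro t ht
      interval_cases t
      · exact Or.inl (k1 2)
      · exact Or.inl (kk 2 3 (by decide))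
      · exact Or.inl (k1 3)
      · right
        intro R hR R' hR' hag
        rw [Finset.mem_filter] at hR hR'
        have hA := F.hA R hR.1
        have hA' := F.hA R' hR'.1
        have hlev : lev R 4 = lev R' 4 :=
          (((lev_of_ff hA hA').2 (hag 0 (by simp))).2 (hag 1 (by simp)) (hag 2 (by simp))).1
        have l2 := lift_hh hA hA' (i := 2) (j := 4) (by decide) hlev
        have l3 := lift_hh hA hA' (i := 3) (j := 4) (by decide) hlev
        set h := hh R 2 4 ((p:ℤ)^(a 2)) with hh1
        set h' := hh R' 2 4 ((p:ℤ)^(a 2)) with hh1'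
        -- κ
        obtain ⟨y, hy⟩ : (p:ℤ) ∣ h 3 := by
          have := ((F.hD R hR.1).1 2 3 (by decide) _).mp ⟨h, l2.m, rfl⟩
          rw [h1 2 3 (by decide), l2.v, a2, pow_one] at this
          have := dvd_sub (dvd_refl (p:ℤ)) this
          simpa using this
        have hκ : ¬ (p:ℤ) ∣ β * δ - α * ε * y := by
          intro hdv
          apply hR.2
          intro r hr r0 r1 r2
          have h4 : (p:ℤ)^(a 3) ∣ (r - h) 3 := (hA 3 _).mp ⟨r - h, R.sub_mem hr l2.m, fun i hi => by
            have : i = 0 ∨ i = 1 ∨ i = 2 := by decide +revert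
            rcases this with rfl | rfl | rfl
            · simp [r0, l2.z 0 (by decide)]
            · simp [r1, l2.z 1 (by decide)]
            · simp [r2, l2.v, a2], rfl⟩
          rw [a3, Pi.sub_apply, hy] at h4
          obtain ⟨w, hw⟩ := hdv
          obtain ⟨w', hw'⟩ := h4
          refine ⟨w - α * ε * w', ?_⟩
          linear_combination (p:ℤ) * hw - α * ε * hw'
        -- the element U
        have main : ∀ S : Subring V5, IsA p S a → x ∈ S → ∀ g h : V5, g ∈ S → h ∈ S → h 3 = p * y →
            h 0 = 0 → h 1 = 0 → h 2 = p → g 0 = 0 → g 1 = 0 → g 2 = 0 → g 3 = (p:ℤ)^2 →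
            (p:ℤ)^(a 4) ∣ β * ((x 4 - x 0) * (x 4 - x 1)) - (β * δ - α * ε * y) * g 4 := by
          intro S hS hxS g h hg hh h3 hz0 hz1 hz2 g0 g1 g2 g3
          have hone : ∀ c : ℤ, (c • (1 : V5)) ∈ S := fun c => S.zsmul_mem S.one_mem c
          refine (hS 4 _).mp ⟨β • ((x - (x 0) • (1:V5)) * (x - (x 1) • (1:V5)))
            - α • ((x - (x 4) • (1:V5)) * h) - (β * δ - α * ε * y) • g, ?_, ?_, ?_⟩
          · exact S.sub_mem (S.sub_mem (S.zsmul_mem (S.mul_mem (S.sub_mem hxS (hone _))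
              (S.sub_mem hxS (hone _))) _) (S.zsmul_mem (S.mul_mem (S.sub_mem hxS (hone _)) hh) _))
              (S.zsmul_mem hg _)
          · intro i hi
            have : i = 0 ∨ i = 1 ∨ i = 2 ∨ i = 3 := by decide +revert
            rcases this with rfl | rfl | rfl | rfl
            · simp [hz0, g0]
            · simp [hz1, g1]
            · simp only [Pi.sub_apply, Pi.smul_apply, Pi.mul_apply, Pi.one_apply, smul_eq_mul, mul_one,
                hz2, g2, mul_zero, sub_zero]
              rw [hβ, show x 2 - x 0 = -(p * u02) by rw [← h02]; ring,
                show x 2 - x 1 = -(p * u12) by rw [← h12]; ring, hα]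
              ring
            · simp only [Pi.sub_apply, Pi.smul_apply, Pi.mul_apply, Pi.one_apply, smul_eq_mul, mul_one,
                h3, g3]
              rw [hε, show x 3 - x 0 = -(p * u03) by rw [← h03]; ring,
                show x 3 - x 1 = -(p * u13) by rw [← h13]; ring, hδ]
              ring
          · simp
        have m1 := main R hA (F.hx R hR.1) _ h l3.m l2.m hy (l2.z 0 (by decide)) (l2.z 1 (by decide))
          (by rw [l2.v, a2, pow_one]) (l3.z 0 (by decide)) (l3.z 1 (by decide)) (l3.z 2 (by decide))
          (by rw [l3.v, a3])
        have m2 := main R' hA' (F.hx R' hR'.1) _ h' l3.m' l2.m'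
          (by rw [← l2.eq 3 (by decide), hy])
          (by rw [← l2.eq 0 (by decide)]; exact (l2.z 0 (by decide)))
          (by rw [← l2.eq 1 (by decide)]; exact (l2.z 1 (by decide)))
          (by rw [← l2.eq 2 (by decide), l2.v, a2, pow_one])
          (by rw [← l3.eq 0 (by decide)]; exact (l3.z 0 (by decide)))
          (by rw [← l3.eq 1 (by decide)]; exact (l3.z 1 (by decide)))
          (by rw [← l3.eq 2 (by decide)]; exact (l3.z 2 (by decide)))
          (by rw [← l3.eq 3 (by decide), l3.v, a3])
        change hh R 3 4 ((p:ℤ)^(a 3)) 4 % (p:ℤ)^(a 4) = hh R' 3 4 ((p:ℤ)^(a 3)) 4 % (p:ℤ)^(a 4)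
        apply Int.ModEq.symm
        apply (Int.modEq_iff_dvd).mpr
        have m3 := dvd_sub m2 m1
        have hc : IsCoprime ((p:ℤ)^(a 4)) (β * δ - α * ε * y) :=
          ((hpi.coprime_iff_not_dvd).mpr hκ).pow_left
        apply hc.dvd_of_dvd_mul_left
        convert m3 using 1
        ring
      · exact Or.inl (kk 2 4 (by decide))
      · exact Or.inl (k1 4))
    simpa [Finset.sum_range_succ] using this
  rw [← Finset.card_filter_add_card_filter_not (s := A) K]
  omega

end
end SubringAsymp

end

section

namespace SubringAsymp

section
variable {p : ℕ} {a : Fin 5 → ℕ} {R R' : Subring V5} {d : Fin 5 → Fin 5 → ℕ}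

lemma numeric (d01 d02 d12 d13 d23 d04 d14 d24 d34 a2 a3 : ℕ)
    (h01 : d01 ≤ 1) (h02 : d02 ≤ 1) (h12 : d12 ≤ 1) (h13 : d13 ≤ 1) (h23 : d23 ≤ 1)
    (h04 : d04 ≤ 1) (h14 : d14 ≤ 1) (h24 : d24 ≤ 1) (h34 : d34 ≤ 1)
    (hs : 2 ≤ d01 + d02 + d12 + 1 + d13 + d23 + d04 + d14 + d24 + d34)
    (b1 : d02 ≤ a2) (b2 : d12 ≤ a2) (b3 : 1 ≤ a3)
    (u012 : min d02 d12 ≤ d01) (u021 : min d01 d12 ≤ d02) (u120 : min d01 d02 ≤ d12)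
    (u013 : d13 ≤ d01) (u031 : d01 ≤ d13)
    (u023 : d23 ≤ d02) (u032 : d02 ≤ d23)
    (u043 : d34 ≤ d04) (u034 : d04 ≤ d34)
    (u014 : min d04 d14 ≤ d01) (u041 : min d01 d14 ≤ d04) (u140 : min d01 d04 ≤ d14)
    (u024 : min d04 d24 ≤ d02) (u042 : min d02 d24 ≤ d04) (u240 : min d02 d04 ≤ d24)
    (u124 : min d14 d24 ≤ d12) (u142 : min d12 d24 ≤ d14) (u241 : min d12 d14 ≤ d24)
    (hne : ¬ (d01 = 1 ∧ d02 = 1 ∧ d12 = 1 ∧ d13 = 1 ∧ d23 = 1 ∧ d04 = 1 ∧ d14 = 1 ∧ d24 = 1 ∧ d34 = 1)) :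
    min (d02 + d12 - a2) d23 + min (d02 + d12 - a2) d24 + min (1 + d13 + d23 - a3) d34 + 2 ≤
    d01 + max d02 d12 + max 1 (max d13 d23) + max d04 (max d14 (max d24 d34)) := by
  obtain rfl : d13 = d01 := le_antisymm u013 u031
  obtain rfl : d23 = d02 := le_antisymm u023 u032
  obtain rfl : d34 = d04 := le_antisymm u043 u034
  interval_cases d13 <;> interval_cases d23 <;> interval_cases d34 <;> interval_cases d12 <;> omega

lemma fix_two {k : ℕ} {A : Finset (Subring V5)} {x : V5} (hk2 : 2 ≤ k) (F : Fam p k 0 d a A x) :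
    A.card * p^2 ≤ 2 * p^(wt d) := by
  classical
  rcases A.eq_empty_or_nonempty with rfl | ⟨R, hR⟩
  · simp
  have hp := F.hp
  have hA := F.hA R hR
  have hD := F.hD R hR
  by_cases hbig : 2 ≤ d 0 3
  · have := fix_gen F
    calc A.card * p^2 ≤ A.card * p^(d 0 3) := Nat.mul_le_mul_left _ (Nat.pow_le_pow_right hp.pos hbig)
      _ ≤ p^(wt d) := by simpa using this
      _ ≤ _ := by omega
  push Not at hbig
  have hsum : k ≤ d 0 1 + (d 0 2 + d 1 2) + (d 0 3 + d 1 3 + d 2 3) + (d 0 4 + d 1 4 + d 2 4 + d 3 4) := by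
    have h1 := index_le hp hA (F.hk R hR)
    have h2 : ∑ j, a j ≤ ∑ j, DD d j := Finset.sum_le_sum fun j _ => a_le_DD hp hA hD j
    simp only [Fin.sum_univ_five (fun j => DD d j), DD_zero, DD_one, DD_two, DD_three, DD_four] at h2
    omega
  have S := F.srt
  have h03 : d 0 3 = 1 := by
    have := S 0 1; have := S 0 2; have := S 1 2; have := S 1 3; have := S 2 3
    have := S 0 4; have := S 1 4; have := S 2 4; have := S 3 4
    omega
  have dle : ∀ i j, d i j ≤ 1 := fun i j => h03 ▸ S i j
  have sy := d_symm hp hD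
  have al : ∀ l j, l < j → d l j ≤ a j := fun l j h => d_le_a hp hA hD h
  have ule := fun (i j l : Fin 5) (h : i ≠ j ∧ j ≠ l ∧ i ≠ l) => d_ultra hp hD h.1 h.2.1 h.2.2
  have k1 : ∀ j, Kill p a x 1 j 0 := fun j => (kill2 hp F.good hA (F.hx R hR)).mono (by
    have := al 0 1 (by decide)
    rw [DD_one]; simp; omega)
  have kmin : ∀ i j, i < j → Kill p a x i j (min (DD d i - a i) (d i j)) := fun i j hij => by
    rcases le_total (DD d i - a i) (d i j) with h | h
    · rw [min_eq_left h]; exact (kill2 hp F.good hA (F.hx R hR)).mono (by simp)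
    · rw [min_eq_right h]; exact kill1 hp F.good hij
  -- finishing
  have fin : ∀ e, A.card ≤ p^e → e + 2 ≤ wt d → A.card * p^2 ≤ 2 * p^(wt d) := by
    intro e h1 h2
    calc A.card * p^2 ≤ p^e * p^2 := Nat.mul_le_mul_right _ h1
      _ = p^(e+2) := by rw [pow_add]
      _ ≤ p^(wt d) := Nat.pow_le_pow_right hp.pos h2
      _ ≤ _ := by omega
  let m : ℕ → ℕ := fun t => match t with
    | 1 => min (DD d 2 - a 2) (d 2 3)
    | 3 => min (DD d 3 - a 3) (d 3 4)
    | 4 => min (DD d 2 - a 2) (d 2 4)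
    | _ => 0
  have cm := count hp A F.hA F.hx m (by
    intro t ht
    left
    interval_cases t
    exacts [k1 2, kmin 2 3 (by decide), k1 3, kmin 3 4 (by decide), kmin 2 4 (by decide), k1 4])
  by_cases hall : d 0 1 = 1 ∧ d 0 2 = 1 ∧ d 1 2 = 1 ∧ d 1 3 = 1 ∧ d 2 3 = 1 ∧ d 0 4 = 1 ∧ d 1 4 = 1 ∧
      d 2 4 = 1 ∧ d 3 4 = 1
  · obtain ⟨q01, q02, q12, q13, q23, q04, q14, q24, q34⟩ := hall
    have hw : wt d = 4 := by simp [wt, q01, q02, q12, q13, q23, q04, q14, q24, q34, h03]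
    have a1 : a 1 = 1 := le_antisymm ((a_le_DD hp hA hD 1).trans (by rw [DD_one, q01]))
      (q01 ▸ al 0 1 (by decide))
    have a2 := a_le_DD hp hA hD 2
    have a3 := a_le_DD hp hA hD 3
    have a2' := al 0 2 (by decide)
    have a3' := al 0 3 (by decide)
    have D2 : DD d 2 = 2 := by rw [DD_two, q02, q12]
    have D3 : DD d 3 = 3 := by rw [DD_three, h03, q13, q23]
    rw [D2] at a2
    rw [D3] at a3
    by_cases c1 : a 2 = 2 ∨ a 3 = 3
    · refine fin _ cm ?_
      rw [hw]
      simp only [Finset.sum_range_succ, Finset.sum_range_zero, m, D2, D3]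
      omega
    have e2 : a 2 = 1 := by omega
    have hall' : ∀ i j, i < j → d i j = 1 := by
      intro i j hij
      fin_cases i <;> fin_cases j <;> first | assumption | (exfalso; revert hij; decide)
    by_cases c2 : a 3 = 2
    · have := special F hall' a1 e2 c2
      rw [hw]
      calc A.card * p^2 ≤ 2 * p^2 * p^2 := Nat.mul_le_mul_right _ this
        _ = _ := by ring
    · have e3 : a 3 = 1 := by omega
      have := count hp A F.hA F.hx (fun t => match t with
          | 3 => 1
          | 4 => 1
          | _ => 0) (by
        intro t ht
        interval_cases t
        · exact Or.inl (k1 2)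
        · right
          have key : ∀ R ∈ A, ff p a 1 R = 0 := by
            intro R hR
            change hh R 2 3 ((p:ℤ)^(a 2)) 3 % (p:ℤ)^(a 3) = 0
            have z := hh_zero (F.hA R hR) (i := 2) (j := 3) (by decide)
            have s := hh_spec (F.hA R hR) (i := 2) (j := 3) (by decide)
            have q := ((F.hD R hR).1 2 3 (by decide) _).mp ⟨_, s.1, rfl⟩
            rw [z.2, q23, e2, pow_one] at q
            rw [e3, e2, pow_one]
            apply Int.emod_eq_zero_of_dvd
            have := dvd_sub (dvd_refl (p:ℤ)) q
            simpa using this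
          intro R hR R' hR' _
          rw [key R hR, key R' hR']
        · exact Or.inl (k1 3)
        · exact Or.inl ((kmin 3 4 (by decide)).mono (by simp only; omega))
        · exact Or.inl ((kmin 2 4 (by decide)).mono (by simp only; omega))
        · exact Or.inl (k1 4))
      refine fin _ this ?_
      rw [hw]
      simp [Finset.sum_range_succ]
  · refine fin _ cm ?_
    have num := numeric (d 0 1) (d 0 2) (d 1 2) (d 1 3) (d 2 3) (d 0 4) (d 1 4) (d 2 4) (d 3 4) (a 2) (a 3)
      (dle _ _) (dle _ _) (dle _ _) (dle _ _) (dle _ _) (dle _ _) (dle _ _) (dle _ _) (dle _ _)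
      (by omega) (al _ _ (by decide)) (al _ _ (by decide)) (h03 ▸ al 0 3 (by decide))
    have U : ∀ i j l : Fin 5, i ≠ j ∧ j ≠ l ∧ i ≠ l → d i j = 1 → d j l ≤ d i l := by
      intro i j l h h'
      have := ule i j l h
      have := dle j l
      omega
    have s10 := sy 1 0
    have s20 := sy 2 0
    have s21 := sy 2 1
    have s30 := sy 3 0
    have s31 := sy 3 1
    have s32 := sy 3 2
    have s40 := sy 4 0
    have s41 := sy 4 1
    have s42 := sy 4 2
    have s43 := sy 4 3
    have num2 := num
      (by have := ule 0 2 1 (by decide); omega)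
      (by have := ule 0 1 2 (by decide); omega)
      (by have := ule 1 0 2 (by decide); omega)
      (by have := ule 0 3 1 (by decide); have := dle 1 3; omega)
      (by have := ule 1 0 3 (by decide); have := dle 0 1; omega)
      (by have := ule 0 3 2 (by decide); have := dle 2 3; omega)
      (by have := ule 2 0 3 (by decide); have := dle 0 2; omega)
      (by have := ule 0 3 4 (by decide); have := dle 3 4; omega)
      (by have := ule 3 0 4 (by decide); have := dle 0 4; omega)
      (by have := ule 0 4 1 (by decide); omega)
      (by have := ule 0 1 4 (by decide); omega)
      (by have := ule 1 0 4 (by decide); omega)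
      (by have := ule 0 4 2 (by decide); omega)
      (by have := ule 0 2 4 (by decide); omega)
      (by have := ule 2 0 4 (by decide); omega)
      (by have := ule 1 4 2 (by decide); omega)
      (by have := ule 1 2 4 (by decide); omega)
      (by have := ule 2 1 4 (by decide); omega)
      hall
    simp only [Finset.sum_range_succ, Finset.sum_range_zero, m, wt, DD_two, DD_three, h03]
    omega

end
end SubringAsymp

end

section

namespace SubringAsymp
open Classical in
noncomputable def cnt (q : ℕ) (P : V5 → Prop) : ℕ :=
  ((Fintype.piFinset (fun _ : Fin 5 => Finset.Ico (0:ℤ) q)).filter P).card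

noncomputable def bx (q : ℕ) : Finset V5 := Fintype.piFinset (fun _ : Fin 5 => Finset.Ico (0:ℤ) q)

lemma cnt_def (q : ℕ) (P : V5 → Prop) [DecidablePred P] : cnt q P = ((bx q).filter P).card := by
  unfold cnt bx; congr

lemma cnt_mono {q : ℕ} {P Q : V5 → Prop} (h : ∀ x, P x → Q x) : cnt q P ≤ cnt q Q := by
  classical
  rw [cnt_def, cnt_def]
  exact Finset.card_le_card (Finset.monotone_filter_right _ (fun x _ => h x))

def redHom (q : ℕ) : V5 →+ (Fin 5 → ZMod q) := (Int.castAddHom (ZMod q)).compLeft (Fin 5)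

lemma redHom_eq_zero {q : ℕ} {x : V5} : redHom q x = 0 ↔ ∀ i, (q:ℤ) ∣ x i := by
  rw [funext_iff]
  exact forall_congr' fun i => ZMod.intCast_zmod_eq_zero_iff_dvd (x i) q

lemma redHom_surj {q : ℕ} : Function.Surjective (redHom q) := by
  intro y
  choose x hx using fun i => ZMod.intCast_surjective (y i)
  exact ⟨x, funext hx⟩

lemma cnt_mul_index {q : ℕ} (hq : 0 < q) (H : AddSubgroup V5) (hH : ∀ v : V5, (q:ℤ) • v ∈ H) :
    cnt q (· ∈ H) * H.index = q^5 := by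
  classical
  have : NeZero q := ⟨hq.ne'⟩
  have hqz : (0:ℤ) < q := by exact_mod_cast hq
  have hker : ∀ x, redHom q x = 0 → x ∈ H := by
    intro x hx
    rw [redHom_eq_zero] at hx
    choose y hy using hx
    have : x = (q:ℤ) • (y : V5) := funext fun i => by simp [hy i]
    rw [this]; exact hH y
  have h1 := AddSubgroup.card_mul_index (H.map (redHom q))
  rw [AddSubgroup.index_map_eq H redHom_surj (fun x hx => hker x hx)] at h1
  have h2 : Nat.card (Fin 5 → ZMod q) = q^5 := by
    rw [Nat.card_fun]; simp
  rw [h2] at h1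
  rw [← h1]
  congr 1
  rw [cnt_def, ← Fintype.card_coe, ← Nat.card_eq_fintype_card]
  refine Nat.card_eq_of_bijective
    (fun x : ((bx q).filter (· ∈ H)) => (⟨redHom q x.1, x.1, (Finset.mem_filter.mp x.2).2, rfl⟩ :
      H.map (redHom q))) ⟨?_, ?_⟩
  · rintro ⟨x, hx⟩ ⟨y, hy⟩ hxy
    have hxy : redHom q x = redHom q y := congrArg Subtype.val hxy
    refine Subtype.ext ?_
    change x = y
    have hx := Fintype.mem_piFinset.mp (Finset.mem_filter.mp hx).1
    have hy := Fintype.mem_piFinset.mp (Finset.mem_filter.mp hy).1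
    funext i
    have h3 : ((x i : ℤ) : ZMod q) = ((y i : ℤ) : ZMod q) := congrFun hxy i
    rw [ZMod.intCast_eq_intCast_iff] at h3
    have hxi := Finset.mem_Ico.mp (hx i)
    have hyi := Finset.mem_Ico.mp (hy i)
    have := h3.eq
    rwa [Int.emod_eq_of_lt hxi.1 hxi.2, Int.emod_eq_of_lt hyi.1 hyi.2] at this
  · rintro ⟨_, x, hx, rfl⟩
    have e : redHom q (fun i => x i % q) = redHom q x := by
      funext i
      change (((x i % q : ℤ)) : ZMod q) = ((x i : ℤ) : ZMod q)
      simp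
    refine ⟨⟨fun i => x i % q, Finset.mem_filter.mpr ⟨?_, ?_⟩⟩, Subtype.ext e⟩
    · exact Fintype.mem_piFinset.mpr fun i => Finset.mem_Ico.mpr
        ⟨Int.emod_nonneg _ hqz.ne', Int.emod_lt_of_pos _ hqz⟩
    · have h3 : redHom q (fun i => x i % q) - redHom q x = 0 := by rw [e, sub_self]
      rw [← map_sub] at h3
      have := H.add_mem (hker _ h3) hx
      simpa using this

def diffHom (i j : Fin 5) (M : ℕ) : V5 →+ ZMod M :=
  { toFun := fun x => ((x i - x j : ℤ) : ZMod M)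
    map_zero' := by simp
    map_add' := by intro x y; simp; ring }

lemma diffHom_ker {i j : Fin 5} {M : ℕ} {x : V5} : x ∈ (diffHom i j M).ker ↔ (M:ℤ) ∣ x i - x j :=
  ZMod.intCast_zmod_eq_zero_iff_dvd _ _

section
variable {p : ℕ} {a : Fin 5 → ℕ} {R R' : Subring V5} {d : Fin 5 → Fin 5 → ℕ}

lemma bad_bound (hp : p.Prime) {k s N : ℕ} (hD : IsD p R d) (hk : R.toAddSubgroup.index = p^k)
    {i j : Fin 5} (hij : i ≠ j) (hN1 : k ≤ N) (hN : d i j + s + 1 ≤ N) :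
    cnt (p^N) (fun x => x ∈ R ∧ (p:ℤ)^(d i j + s + 1) ∣ x i - x j) * (p^(s+1) * p^k) ≤ (p^N)^5 := by
  set M := p^(d i j + s + 1) with hM
  have hM0 : NeZero M := ⟨(pow_pos hp.pos _).ne'⟩
  let H : AddSubgroup V5 := (diffHom i j M).ker ⊓ R.toAddSubgroup
  have hRk : ∀ v : V5, ((p^k : ℕ) : ℤ) • v ∈ R := by
    intro v
    have := R.toAddSubgroup.nsmul_index_mem v
    rw [hk] at this
    rw [natCast_zsmul]; exact this
  have h1 := cnt_mul_index (q := p^N) (pow_pos hp.pos N) H (by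
    intro v
    refine ⟨?_, ?_⟩
    · refine diffHom_ker.mpr ?_
      have : (M:ℤ) ∣ ((p^N : ℕ):ℤ) := by exact_mod_cast pow_dvd_pow p hN
      simpa [mul_sub] using dvd_sub (this.mul_right (v i)) (this.mul_right (v j))
    · obtain ⟨t, rfl⟩ := Nat.exists_eq_add_of_le hN1
      rw [show (((p^(k+t) : ℕ)) : ℤ) = ((p^k : ℕ) : ℤ) * ((p^t : ℕ):ℤ) by push_cast; ring, mul_smul]
      exact hRk _)
  have h2 : H.index = Nat.card (AddSubgroup.map (diffHom i j M) R.toAddSubgroup) * p^k := by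
    rw [← AddSubgroup.relIndex_ker, ← hk, ← AddSubgroup.inf_relIndex_right]
    exact (AddSubgroup.relIndex_mul_index inf_le_right).symm
  have h3 : p^(s+1) ≤ Nat.card (AddSubgroup.map (diffHom i j M) R.toAddSubgroup) := by
    obtain ⟨r, hr, hrd⟩ := (hD.1 i j hij ((p:ℤ)^(d i j))).mpr dvd_rfl
    have : p^(s+1) = Nat.card (Fin (p^(s+1))) := by simp
    rw [this]
    refine Nat.card_le_card_of_injective
      (fun t => (⟨diffHom i j M ((t:ℕ) • r), (t:ℕ) • r, R.nsmul_mem hr _, rfl⟩ :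
        AddSubgroup.map (diffHom i j M) R.toAddSubgroup)) ?_
    intro t t' htt
    have h4 : diffHom i j M ((t:ℕ) • r - (t':ℕ) • r) = 0 := by
      rw [map_sub, sub_eq_zero]; exact congrArg Subtype.val htt
    rw [← AddMonoidHom.mem_ker, diffHom_ker] at h4
    have e : ((t:ℕ) • r - (t':ℕ) • r) i - ((t:ℕ) • r - (t':ℕ) • r) j =
        (p:ℤ)^(d i j) * ((t:ℤ) - (t':ℤ)) := by
      rw [← hrd]; simp; ring
    rw [e, hM, add_assoc, pow_add, Nat.cast_mul, Nat.cast_pow,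
      mul_dvd_mul_iff_left (pow_ne_zero _ (by exact_mod_cast hp.ne_zero))] at h4
    have h5 : (t':ℕ) ≡ t [MOD p^(s+1)] := (Nat.modEq_iff_dvd).mpr h4
    have := Nat.ModEq.eq_of_lt_of_lt h5 t'.2 t.2
    exact (Fin.ext this).symm
  rw [h2] at h1
  have h4 : cnt (p^N) (fun x => x ∈ R ∧ (p:ℤ)^(d i j + s + 1) ∣ x i - x j) ≤ cnt (p^N) (· ∈ H) := by
    refine cnt_mono fun x hx => ⟨?_, hx.1⟩
    refine diffHom_ker.mpr ?_
    rw [hM]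
    push_cast; exact hx.2
  calc _ ≤ cnt (p^N) (· ∈ H) * (p^(s+1) * p^k) := Nat.mul_le_mul_right _ h4
    _ ≤ cnt (p^N) (· ∈ H) * (_ * p^k) := Nat.mul_le_mul_left _ (Nat.mul_le_mul_right _ h3)
    _ = _ := h1

lemma good_bound (hp : p.Prime) {k s N : ℕ} (hD : IsD p R d) (hk : R.toAddSubgroup.index = p^k)
    (hN1 : k ≤ N) (hN : ∀ i j, d i j + s + 1 ≤ N) (hs : 11 ≤ p^(s+1)) :
    (p^N)^5 ≤ 11 * (cnt (p^N) (fun x => x ∈ R ∧ Good p s d x) * p^k) := by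
  classical
  have hRk : ∀ v : V5, ((p^k : ℕ) : ℤ) • v ∈ R := by
    intro v
    have := R.toAddSubgroup.nsmul_index_mem v
    rw [hk] at this
    rw [natCast_zsmul]; exact this
  have h1 := cnt_mul_index (q := p^N) (pow_pos hp.pos N) R.toAddSubgroup (by
      intro v
      obtain ⟨t, rfl⟩ := Nat.exists_eq_add_of_le hN1
      rw [show (((p^(k+t) : ℕ)) : ℤ) = ((p^k : ℕ) : ℤ) * ((p^t : ℕ):ℤ) by push_cast; ring, mul_smul]
      exact hRk _)
  rw [hk] at h1
  let I : Finset (Fin 5 × Fin 5) := Finset.univ.filter (fun t => t.1 < t.2)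
  have hI : I.card = 10 := by decide
  have h2 : cnt (p^N) (· ∈ R.toAddSubgroup) ≤ cnt (p^N) (fun x => x ∈ R ∧ Good p s d x) +
      ∑ t ∈ I, cnt (p^N) (fun x => x ∈ R ∧ (p:ℤ)^(d t.1 t.2 + s + 1) ∣ x t.1 - x t.2) := by
    simp only [cnt_def]
    refine le_trans (Finset.card_le_card ?_) ((Finset.card_union_le _ _).trans
      (Nat.add_le_add_left Finset.card_biUnion_le _))
    intro x hx
    rw [Finset.mem_filter] at hx
    rw [Finset.mem_union, Finset.mem_filter, Finset.mem_biUnion]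
    by_cases hg : Good p s d x
    · exact Or.inl ⟨hx.1, hx.2, hg⟩
    · right
      simp only [Good, not_forall, not_not] at hg
      obtain ⟨i, j, hij, hdv⟩ := hg
      exact ⟨(i, j), Finset.mem_filter.mpr ⟨Finset.mem_univ _, hij⟩, Finset.mem_filter.mpr ⟨hx.1, hx.2, hdv⟩⟩
  have h3 : (∑ t ∈ I, cnt (p^N) (fun x => x ∈ R ∧ (p:ℤ)^(d t.1 t.2 + s + 1) ∣ x t.1 - x t.2)) *
      (11 * p^k) ≤ 10 * (p^N)^5 := by
    rw [Finset.sum_mul, ← hI, ← smul_eq_mul (a := I.card)]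
    refine Finset.sum_le_card_nsmul _ _ _ fun t ht => ?_
    have := bad_bound (s := s) hp hD hk (i := t.1) (j := t.2) (Finset.mem_filter.mp ht).2.ne hN1 (hN _ _)
    refine le_trans (Nat.mul_le_mul_left _ (Nat.mul_le_mul_right _ hs)) this
  have h4 := Nat.mul_le_mul_right (11 * p^k) h2
  rw [add_mul] at h4
  have h5 : cnt (p^N) (· ∈ R.toAddSubgroup) * (11 * p^k) = 11 * (p^N)^5 := by rw [← h1]; ring
  have h6 : cnt (p^N) (fun x => x ∈ R ∧ Good p s d x) * (11 * p^k) =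
    11 * (cnt (p^N) (fun x => x ∈ R ∧ Good p s d x) * p^k) := by ring
  omega

def Cong (p : ℕ) (d : Fin 5 → Fin 5 → ℕ) (x : V5) : Prop := ∀ i j, i < j → (p:ℤ)^(d i j) ∣ x i - x j

def quadHom (i2 i3 i4 : Fin 5) (M1 M2 M3 M4 : ℕ) : V5 →+ ZMod M1 × ZMod M2 × ZMod M3 × ZMod M4 :=
  (diffHom 0 1 M1).prod ((diffHom i2 2 M2).prod ((diffHom i3 3 M3).prod (diffHom i4 4 M4)))

lemma quadHom_surj (i2 i3 i4 : Fin 5) (M1 M2 M3 M4 : ℕ) (h2 : i2 < 2) (h3 : i3 < 3) (h4 : i4 < 4) :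
    Function.Surjective (quadHom i2 i3 i4 M1 M2 M3 M4) := by
  rintro ⟨y1, y2, y3, y4⟩
  obtain ⟨z1, rfl⟩ := ZMod.intCast_surjective y1
  obtain ⟨z2, rfl⟩ := ZMod.intCast_surjective y2
  obtain ⟨z3, rfl⟩ := ZMod.intCast_surjective y3
  obtain ⟨z4, rfl⟩ := ZMod.intCast_surjective y4
  suffices h : ∃ x : V5, x 0 - x 1 = z1 ∧ x i2 - x 2 = z2 ∧ x i3 - x 3 = z3 ∧ x i4 - x 4 = z4 by
    obtain ⟨x, e1, e2, e3, e4⟩ := h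
    refine ⟨x, ?_⟩
    rw [← e1, ← e2, ← e3, ← e4]
    rfl
  let x1 : V5 := Function.update 0 1 (-z1)
  let x2 : V5 := Function.update x1 2 (x1 i2 - z2)
  let x3 : V5 := Function.update x2 3 (x2 i3 - z3)
  let x4 : V5 := Function.update x3 4 (x3 i4 - z4)
  have n2 : i2 ≠ 2 := h2.ne
  have n23 : i2 ≠ 3 := (h2.trans (by decide)).ne
  have n24 : i2 ≠ 4 := (h2.trans (by decide)).ne
  have n3 : i3 ≠ 3 := h3.ne
  have n34 : i3 ≠ 4 := (h3.trans (by decide)).ne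
  have n4 : i4 ≠ 4 := h4.ne
  refine ⟨x4, ?_, ?_, ?_, ?_⟩
  · simp [x4, x3, x2, x1]
  · simp [x4, x3, x2, n2, n23, n24]
  · simp [x4, x3, n3, n34]
  · simp [x4, n4]

lemma cong_bound (hp : p.Prime) {N : ℕ} (hN : ∀ i j, d i j ≤ N) :
    cnt (p^N) (Cong p d) * p^(wt d) ≤ (p^N)^5 := by
  obtain ⟨i2, hi2, e2⟩ : ∃ i2 < (2 : Fin 5), d i2 2 = max (d 0 2) (d 1 2) := by
    rcases max_choice (d 0 2) (d 1 2) with h | h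
    exacts [⟨0, by decide, h.symm⟩, ⟨1, by decide, h.symm⟩]
  obtain ⟨i3, hi3, e3⟩ : ∃ i3 < (3 : Fin 5), d i3 3 = max (d 0 3) (max (d 1 3) (d 2 3)) := by
    rcases max_choice (d 0 3) (max (d 1 3) (d 2 3)) with h | h
    · exact ⟨0, by decide, h.symm⟩
    · rw [h]
      rcases max_choice (d 1 3) (d 2 3) with h | h
      exacts [⟨1, by decide, h.symm⟩, ⟨2, by decide, h.symm⟩]
  obtain ⟨i4, hi4, e4⟩ : ∃ i4 < (4 : Fin 5), d i4 4 = max (d 0 4) (max (d 1 4) (max (d 2 4) (d 3 4))) := by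
    rcases max_choice (d 0 4) (max (d 1 4) (max (d 2 4) (d 3 4))) with h | h
    · exact ⟨0, by decide, h.symm⟩
    · rw [h]
      rcases max_choice (d 1 4) (max (d 2 4) (d 3 4)) with h | h
      · exact ⟨1, by decide, h.symm⟩
      · rw [h]
        rcases max_choice (d 2 4) (d 3 4) with h | h
        exacts [⟨2, by decide, h.symm⟩, ⟨3, by decide, h.symm⟩]
  let φ := quadHom i2 i3 i4 (p^(d 0 1)) (p^(d i2 2)) (p^(d i3 3)) (p^(d i4 4))
  have hker : ∀ x, x ∈ φ.ker ↔ (((p^(d 0 1) : ℕ):ℤ) ∣ x 0 - x 1 ∧ ((p^(d i2 2) : ℕ):ℤ) ∣ x i2 - x 2 ∧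
      ((p^(d i3 3) : ℕ):ℤ) ∣ x i3 - x 3 ∧ ((p^(d i4 4) : ℕ):ℤ) ∣ x i4 - x 4) := by
    intro x
    rw [← diffHom_ker, ← diffHom_ker, ← diffHom_ker, ← diffHom_ker]
    simp only [AddMonoidHom.mem_ker, φ, quadHom, AddMonoidHom.prod_apply, Prod.mk_eq_zero]
  have h1 := cnt_mul_index (q := p^N) (pow_pos hp.pos N) φ.ker (by
    intro v
    rw [hker]
    have : ∀ i j, ((p^(d i j) : ℕ):ℤ) ∣ (((p^N : ℕ):ℤ) • v) i - (((p^N : ℕ):ℤ) • v) j := by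
      intro i j
      have : ((p^(d i j) : ℕ):ℤ) ∣ ((p^N : ℕ):ℤ) := by exact_mod_cast pow_dvd_pow p (hN i j)
      simpa [mul_sub] using dvd_sub (this.mul_right (v i)) (this.mul_right (v j))
    exact ⟨this _ _, this _ _, this _ _, this _ _⟩)
  have h2 : φ.ker.index = p^(wt d) := by
    rw [AddSubgroup.index_ker, AddMonoidHom.range_eq_top.mpr (quadHom_surj _ _ _ _ _ _ _ hi2 hi3 hi4)]
    rw [Nat.card_congr AddSubgroup.topEquiv.toEquiv]
    simp only [Nat.card_prod, Nat.card_zmod, wt]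
    rw [← e2, ← e3, ← e4, pow_add, pow_add, pow_add]; ring
  rw [h2] at h1
  rw [← h1]
  refine Nat.mul_le_mul_right _ (cnt_mono fun x hx => ?_)
  rw [hker]
  push_cast
  exact ⟨hx _ _ (by decide), hx _ _ hi2, hx _ _ hi3, hx _ _ hi4⟩

/-- averaging -/
lemma avg (hp : p.Prime) {k s G c : ℕ} (A : Finset (Subring V5)) (hD : ∀ R ∈ A, IsD p R d)
    (hk : ∀ R ∈ A, R.toAddSubgroup.index = p^k) (hd : ∀ i j, d i j ≤ k) (hs : 11 ≤ p^(s+1))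
    (hM : ∀ x, Good p s d x → ∀ A' ⊆ A, (∀ R ∈ A', x ∈ R) → A'.card * p^G ≤ c * p^(wt d)) :
    A.card * p^G ≤ 11 * c * p^k := by
  classical
  set N := k + s + 1 with hNdef
  let r : Subring V5 → V5 → Prop := fun R x => x ∈ R ∧ Good p s d x
  have dc := Finset.sum_card_bipartiteAbove_eq_sum_card_bipartiteBelow r (s := A) (t := bx (p^N))
  have low : A.card * (p^N)^5 ≤ 11 * p^k * ∑ R ∈ A, (Finset.bipartiteAbove r (bx (p^N)) R).card := by
    rw [Finset.mul_sum, ← smul_eq_mul]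
    refine Finset.card_nsmul_le_sum _ _ _ fun R hR => ?_
    have := good_bound (s := s) (N := N) hp (hD R hR) (hk R hR) (by omega)
      (fun i j => by have := hd i j; omega) hs
    rw [cnt_def] at this
    refine this.trans (le_of_eq ?_)
    rw [Finset.bipartiteAbove]; ring
  have up : (∑ x ∈ bx (p^N), (Finset.bipartiteBelow r A x).card) * p^G ≤ cnt (p^N) (Cong p d) * (c * p^(wt d)) := by
    rw [cnt_def, ← smul_eq_mul (a := Finset.card _), Finset.sum_mul]
    rw [← Finset.sum_filter_of_ne (p := Cong p d)]
    · refine Finset.sum_le_card_nsmul _ _ _ fun x _ => ?_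
      by_cases hg : Good p s d x
      · exact hM x hg _ (Finset.filter_subset _ _) (fun R hR => (Finset.mem_filter.mp hR).2.1)
      · rw [Finset.bipartiteBelow, Finset.filter_false_of_mem (fun R _ h => hg h.2)]; simp
    · intro x hx hne
      have : (Finset.bipartiteBelow r A x).card ≠ 0 := fun h => hne (by rw [h, zero_mul])
      obtain ⟨R, hR⟩ := Finset.card_pos.mp (Nat.pos_of_ne_zero this)
      rw [Finset.bipartiteBelow, Finset.mem_filter] at hR
      intro i j hij
      exact ((hD R hR.1).1 i j hij.ne _).mp ⟨x, hR.2.1, rfl⟩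
  have cb := cong_bound hp (d := d) (N := N) (fun i j => by have := hd i j; omega)
  have hq : 0 < (p^N)^5 := pow_pos (pow_pos hp.pos _) _
  refine Nat.le_of_mul_le_mul_right (c := (p^N)^5) ?_ hq
  calc A.card * p^G * (p^N)^5 = A.card * (p^N)^5 * p^G := by ring
    _ ≤ _ * p^G := Nat.mul_le_mul_right _ low
    _ = 11 * p^k * ((∑ x ∈ bx (p^N), (Finset.bipartiteBelow r A x).card) * p^G) := by rw [dc]; ring
    _ ≤ 11 * p^k * (cnt (p^N) (Cong p d) * (c * p^(wt d))) := Nat.mul_le_mul_left _ up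
    _ = 11 * p^k * c * (cnt (p^N) (Cong p d) * p^(wt d)) := by ring
    _ ≤ 11 * p^k * c * (p^N)^5 := Nat.mul_le_mul_left _ cb
    _ = _ := by ring

end
end SubringAsymp

end

section

namespace SubringAsymp

section
variable {p : ℕ} {a : Fin 5 → ℕ} {R R' : Subring V5} {d : Fin 5 → Fin 5 → ℕ}

def C0 : ℕ := 11 * 10^26

lemma class_bound (hp : p.Prime) {k : ℕ} (hk2 : 2 ≤ k) (A : Finset (Subring V5))
    (hA : ∀ R ∈ A, IsA p R a) (hD : ∀ R ∈ A, IsD p R d)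
    (hk : ∀ R ∈ A, R.toAddSubgroup.index = p^k) (hd : ∀ i j, d i j ≤ k)
    (srt : ∀ i j, d i j ≤ d 0 3) : A.card * p^(max 2 (k/10)) ≤ C0 * p^k := by
  rcases A.eq_empty_or_nonempty with rfl | ⟨R, hR⟩
  · simp
  have hsum : k ≤ 10 * d 0 3 := by
    have h1 := index_le hp (hA R hR) (hk R hR)
    have h2 : ∑ j, a j ≤ ∑ j, DD d j := Finset.sum_le_sum fun j _ => a_le_DD hp (hA R hR) (hD R hR) j
    simp only [Fin.sum_univ_five (fun j => DD d j), DD_zero, DD_one, DD_two, DD_three, DD_four] at h2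
    have := srt 0 1; have := srt 0 2; have := srt 1 2; have := srt 1 3; have := srt 2 3
    have := srt 0 4; have := srt 1 4; have := srt 2 4; have := srt 3 4
    omega
  by_cases hp11 : 11 ≤ p
  · have := avg (s := 0) (G := max 2 (k/10)) (c := 2) hp A hD hk hd (by simpa using hp11) (by
      intro x hx A' hA' hxA'
      have F : Fam p k 0 d a A' x := ⟨hp, fun R hR => hA R (hA' hR), fun R hR => hD R (hA' hR),
        fun R hR => hk R (hA' hR), hxA', hx, srt⟩
      by_cases h2 : k/10 ≤ 2
      · rw [max_eq_left h2]; exact fix_two hk2 F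
      · have h3 := fix_gen F
        rw [max_eq_right (by omega)]
        calc A'.card * p^(k/10) ≤ A'.card * p^(d 0 3) :=
              Nat.mul_le_mul_left _ (Nat.pow_le_pow_right hp.pos (by omega))
          _ ≤ p^(wt d) := by simpa using h3
          _ ≤ _ := by omega)
    refine this.trans (Nat.mul_le_mul_right _ ?_)
    rw [C0]; norm_num
  · have hp10 : p ≤ 10 := by omega
    have := avg (s := 3) (G := d 0 3) (c := 10^24) hp A hD hk hd (by
        calc 11 ≤ 2^(3+1) := by norm_num
          _ ≤ p^(3+1) := Nat.pow_le_pow_left hp.two_le _) (by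
      intro x hx A' hA' hxA'
      have F : Fam p k 3 d a A' x := ⟨hp, fun R hR => hA R (hA' hR), fun R hR => hD R (hA' hR),
        fun R hR => hk R (hA' hR), hxA', hx, srt⟩
      have h3 := fix_gen F
      refine h3.trans ?_
      rw [pow_add, mul_comm]
      exact Nat.mul_le_mul_right _ (Nat.pow_le_pow_left hp10 _))
    have h4 : p^(max 2 (k/10)) ≤ 100 * p^(d 0 3) := by
      calc p^(max 2 (k/10)) ≤ p^(2 + d 0 3) := Nat.pow_le_pow_right hp.pos (by omega)
        _ = p^2 * p^(d 0 3) := pow_add _ _ _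
        _ ≤ 10^2 * p^(d 0 3) := Nat.mul_le_mul_right _ (Nat.pow_le_pow_left hp10 _)
        _ = _ := by norm_num
    calc A.card * p^(max 2 (k/10)) ≤ A.card * (100 * p^(d 0 3)) := Nat.mul_le_mul_left _ h4
      _ = 100 * (A.card * p^(d 0 3)) := by ring
      _ ≤ 100 * (11 * 10^24 * p^k) := Nat.mul_le_mul_left _ this
      _ = _ := by rw [C0]; ring

def Srt (p : ℕ) (R : Subring V5) : Prop := ∃ d, IsD p R d ∧ ∀ i j, d i j ≤ d 0 3

lemma pow_smul_mem {k : ℕ} (hk : R.toAddSubgroup.index = p^k) (v : V5) : ((p:ℤ)^k) • v ∈ R := by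
  have := R.toAddSubgroup.nsmul_index_mem v
  rw [hk] at this
  rw [← Nat.cast_pow, natCast_zsmul]; exact this

lemma isD_unique (hp : p.Prime) {d' : Fin 5 → Fin 5 → ℕ} (h : IsD p R d) (h' : IsD p R d') : d = d' := by
  funext i j
  by_cases hij : i = j
  · rw [hij, h.2, h'.2]
  · have key : ∀ m n : ℕ, (p:ℤ)^m ∣ (p:ℤ)^n → m ≤ n := fun m n hmn =>
      (Nat.pow_dvd_pow_iff_le_right hp.one_lt).mp (by exact_mod_cast hmn)
    refine le_antisymm (key _ _ ?_) (key _ _ ?_)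
    · exact (h.1 i j hij _).mp ((h'.1 i j hij _).mpr dvd_rfl)
    · exact (h'.1 i j hij _).mp ((h.1 i j hij _).mpr dvd_rfl)

lemma sorted_bound (hp : p.Prime) {k : ℕ} (hk2 : 2 ≤ k) (A : Finset (Subring V5))
    (hk : ∀ R ∈ A, R.toAddSubgroup.index = p^k) (hs : ∀ R ∈ A, Srt p R) :
    A.card * p^(max 2 (k/10)) ≤ (k+1)^30 * (C0 * p^k) := by
  classical
  have h1 : ∀ R : Subring V5, ∃ a, R ∈ A → IsA p R a ∧ ∀ j, a j ≤ k := by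
    intro R
    by_cases hR : R ∈ A
    · obtain ⟨a, ha⟩ := exists_isA p k hp R (pow_smul_mem (hk R hR))
      exact ⟨a, fun _ => ha⟩
    · exact ⟨0, fun h => absurd h hR⟩
  have h2 : ∀ R : Subring V5, ∃ d, R ∈ A → IsD p R d ∧ (∀ i j, d i j ≤ k) ∧ ∀ i j, d i j ≤ d 0 3 := by
    intro R
    by_cases hR : R ∈ A
    · obtain ⟨d, hd⟩ := exists_isD p k hp R (pow_smul_mem (hk R hR))
      obtain ⟨d', hd', h⟩ := hs R hR
      rw [← isD_unique hp hd.1 hd'] at h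
      exact ⟨d, fun _ => ⟨hd.1, hd.2, h⟩⟩
    · exact ⟨0, fun h => absurd h hR⟩
  choose a ha using h1
  choose d hd using h2
  let T : Finset ((Fin 5 → ℕ) × (Fin 5 → Fin 5 → ℕ)) :=
    (Fintype.piFinset fun _ => Finset.range (k+1)) ×ˢ
      (Fintype.piFinset fun _ => Fintype.piFinset fun _ => Finset.range (k+1))
  have hT : T.card = (k+1)^30 := by
    simp [T, Finset.card_product, Fintype.card_piFinset]
    ring
  have hmap : ∀ R ∈ A, (a R, d R) ∈ T := by
    intro R hR
    simp only [T, Finset.mem_product, Fintype.mem_piFinset, Finset.mem_range]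
    exact ⟨fun i => Nat.lt_succ_of_le ((ha R hR).2 i), fun i j => Nat.lt_succ_of_le ((hd R hR).2.1 i j)⟩
  rw [Finset.card_eq_sum_card_fiberwise (f := fun R => (a R, d R)) (t := T) hmap, Finset.sum_mul, ← hT,
    ← smul_eq_mul (a := T.card)]
  refine Finset.sum_le_card_nsmul _ _ _ fun t _ => ?_
  rcases (A.filter (fun R => (a R, d R) = t)).eq_empty_or_nonempty with he | ⟨R0, hR0⟩
  · rw [he]; simp
  rw [Finset.mem_filter] at hR0
  obtain ⟨hR0, rfl⟩ := hR0
  refine class_bound (a := a R0) (d := d R0) hp hk2 _ ?_ ?_ ?_ (hd R0 hR0).2.1 (hd R0 hR0).2.2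
  · intro R hR
    rw [Finset.mem_filter, Prod.mk.injEq] at hR
    rw [← hR.2.1]; exact (ha R hR.1).1
  · intro R hR
    rw [Finset.mem_filter, Prod.mk.injEq] at hR
    rw [← hR.2.2]; exact (hd R hR.1).1
  · intro R hR
    exact hk R (Finset.mem_filter.mp hR).1

def permHom (τ : Equiv.Perm (Fin 5)) : V5 →+* V5 := RingHom.pi fun i => Pi.evalRingHom _ (τ i)

lemma permHom_apply (τ : Equiv.Perm (Fin 5)) (x : V5) (i : Fin 5) : permHom τ x i = x (τ i) := rfl

lemma permHom_surj (τ : Equiv.Perm (Fin 5)) : Function.Surjective (permHom τ) := fun y =>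
  ⟨fun i => y (τ.symm i), funext fun i => by rw [permHom_apply]; simp⟩

lemma exists_sort (hp : p.Prime) {k : ℕ} (hk : R.toAddSubgroup.index = p^k) :
    ∃ τ : Equiv.Perm (Fin 5), (R.comap (permHom τ)).toAddSubgroup.index = p^k ∧
      Srt p (R.comap (permHom τ)) := by
  obtain ⟨d, hd, _⟩ := exists_isD p k hp R (pow_smul_mem hk)
  obtain ⟨⟨i0, j0⟩, h0, hmax⟩ := Finset.exists_max_image
    (Finset.univ.filter (fun t : Fin 5 × Fin 5 => t.1 ≠ t.2)) (fun t => d t.1 t.2) ⟨(0,1), by decide⟩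
  have hne : i0 ≠ j0 := (Finset.mem_filter.mp h0).2
  obtain ⟨ρ, hρ0, hρ3⟩ : ∃ ρ : Equiv.Perm (Fin 5), ρ 0 = i0 ∧ ρ 3 = j0 := by
    refine ⟨Equiv.swap j0 (Equiv.swap 0 i0 3) * Equiv.swap 0 i0, ?_⟩
    clear h0 hmax
    revert i0 j0
    decide
  have hmem : ∀ r ∈ R, (fun i => r (ρ i)) ∈ R.comap (permHom ρ.symm) := by
    intro r hr
    rw [Subring.mem_comap]
    have : permHom ρ.symm (fun i => r (ρ i)) = r := by
      funext i; rw [permHom_apply]; simp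
    rw [this]; exact hr
  refine ⟨ρ.symm, ?_, fun i j => d (ρ i) (ρ j), ⟨fun i j hij c => ?_, fun i => hd.2 _⟩, fun i j => ?_⟩
  · rw [← hk]
    exact AddSubgroup.index_comap_of_surjective R.toAddSubgroup (f := (permHom ρ.symm).toAddMonoidHom)
      (permHom_surj _)
  · rw [← hd.1 (ρ i) (ρ j) (ρ.injective.ne hij)]
    constructor
    · rintro ⟨r, hr, rfl⟩
      refine ⟨permHom ρ.symm r, hr, ?_⟩
      rw [permHom_apply, permHom_apply]; simp
    · rintro ⟨r, hr, rfl⟩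
      exact ⟨_, hmem r hr, rfl⟩
  · simp only [hρ0, hρ3]
    by_cases hij : i = j
    · rw [hij, hd.2]; exact Nat.zero_le _
    · exact hmax (ρ i, ρ j) (Finset.mem_filter.mpr ⟨Finset.mem_univ _, ρ.injective.ne hij⟩)

theorem core_bound (hp : p.Prime) {k : ℕ} (hk2 : 2 ≤ k) (A : Finset (Subring V5))
    (hk : ∀ R ∈ A, R.toAddSubgroup.index = p^k) :
    A.card * p^(max 2 (k/10)) ≤ 120 * ((k+1)^30 * (C0 * p^k)) := by
  classical
  have h1 : ∀ R : Subring V5, ∃ τ : Equiv.Perm (Fin 5), R ∈ A →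
      (R.comap (permHom τ)).toAddSubgroup.index = p^k ∧ Srt p (R.comap (permHom τ)) := by
    intro R
    by_cases hR : R ∈ A
    · obtain ⟨τ, h⟩ := exists_sort hp (hk R hR)
      exact ⟨τ, fun _ => h⟩
    · exact ⟨1, fun h => absurd h hR⟩
  choose τ hτ using h1
  let S := A.image (fun R => R.comap (permHom (τ R)))
  have hS := sorted_bound hp hk2 S
    (fun R hR => by
      obtain ⟨R1, hR1, rfl⟩ := Finset.mem_image.mp hR
      exact (hτ R1 hR1).1)
    (fun R hR => by
      obtain ⟨R1, hR1, rfl⟩ := Finset.mem_image.mp hR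
      exact (hτ R1 hR1).2)
  have hc : A.card ≤ ((Finset.univ : Finset (Equiv.Perm (Fin 5))) ×ˢ S).card := by
    refine Finset.card_le_card_of_injOn (fun R => (τ R, R.comap (permHom (τ R)))) ?_ ?_
    · intro R hR
      simp only [Finset.coe_product, Set.mem_prod, Finset.mem_coe, Finset.mem_univ, true_and]
      exact Finset.mem_image_of_mem _ hR
    · intro R _ R' _ h
      simp only [Prod.mk.injEq] at h
      obtain ⟨h1, h2⟩ := h
      rw [← h1] at h2
      ext y
      obtain ⟨x, rfl⟩ := permHom_surj (τ R) y
      rw [← Subring.mem_comap, ← Subring.mem_comap, h2]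
  rw [Finset.card_product, Finset.card_univ, Fintype.card_perm, Fintype.card_fin] at hc
  calc A.card * p^(max 2 (k/10)) ≤ (Nat.factorial 5 * S.card) * p^(max 2 (k/10)) := Nat.mul_le_mul_right _ hc
    _ = 120 * (S.card * p^(max 2 (k/10))) := by rw [show Nat.factorial 5 = 120 by decide]; ring
    _ ≤ _ := Nat.mul_le_mul_left _ hS

end
end SubringAsymp

end

section

namespace SubringAsymp

section
variable {n : ℕ}

lemma idx_mem {R : Subring (Fin n → ℤ)} {r : ℕ} (h : R.toAddSubgroup.index = r) (v : Fin n → ℤ) :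
    r • v ∈ R := by
  have := R.toAddSubgroup.nsmul_index_mem v
  rw [h] at this
  exact this

lemma finite_subrings (n : ℕ) {r : ℕ} (hr : 0 < r) :
    Finite {R : Subring (Fin n → ℤ) // R.toAddSubgroup.index = r} := by
  have : NeZero r := ⟨hr.ne'⟩
  let red : (Fin n → ℤ) → (Fin n → ZMod r) := fun x i => (x i : ZMod r)
  refine Finite.of_injective (β := Set (Fin n → ZMod r)) (fun R => red '' (R.1 : Set (Fin n → ℤ))) ?_
  have key : ∀ R R' : Subring (Fin n → ℤ), R'.toAddSubgroup.index = r →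
      red '' (R : Set (Fin n → ℤ)) ⊆ red '' (R' : Set (Fin n → ℤ)) → R ≤ R' := by
    intro R R' hR' h x hx
    obtain ⟨y, hy, hxy⟩ := h ⟨x, hx, rfl⟩
    have h1 : ∀ i, (r:ℤ) ∣ x i - y i := fun i =>
      (ZMod.intCast_eq_intCast_iff_dvd_sub _ _ _).mp (congrFun hxy i)
    choose z hz using h1
    have : x = y + r • (z : Fin n → ℤ) := by
      funext i
      have := hz i
      rw [Pi.add_apply, Pi.smul_apply, nsmul_eq_mul]
      linarith
    rw [this]
    exact R'.add_mem hy (idx_mem hR' z)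
  rintro ⟨R, hR⟩ ⟨R', hR'⟩ h
  simp only at h
  exact Subtype.ext (le_antisymm (key R R' hR' h.subset) (key R' R hR h.superset))

lemma count_one (n : ℕ) : subringCount n 1 = 1 := by
  rw [subringCount, Nat.card_eq_one_iff_unique]
  refine ⟨⟨?_⟩, ⟨⟨⊤, ?_⟩⟩⟩
  · rintro ⟨R, hR⟩ ⟨R', hR'⟩
    rw [AddSubgroup.index_eq_one] at hR hR'
    exact Subtype.ext (Subring.toAddSubgroup_injective (hR.trans hR'.symm))
  · rw [AddSubgroup.index_eq_one]; rfl

lemma count_mono {n : ℕ} (hn : n ≤ 5) {r : ℕ} (hr : 0 < r) : subringCount n r ≤ subringCount 5 r := by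
  have := finite_subrings 5 hr
  let ρ : (Fin 5 → ℤ) →+* (Fin n → ℤ) := RingHom.pi fun i => Pi.evalRingHom _ (Fin.castLE hn i)
  have hρ : Function.Surjective ρ := by
    intro y
    refine ⟨fun i => if h : (i:ℕ) < n then y ⟨i, h⟩ else 0, ?_⟩
    funext i
    change (if h : ((Fin.castLE hn i : Fin 5):ℕ) < n then y ⟨_, h⟩ else 0) = y i
    simp
  refine Nat.card_le_card_of_injective (fun R => ⟨R.1.comap ρ, ?_⟩) ?_
  · have h := R.2
    nth_rw 2 [← h]
    exact AddSubgroup.index_comap_of_surjective R.1.toAddSubgroup (f := ρ.toAddMonoidHom) hρ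
  · rintro ⟨R, hR⟩ ⟨R', hR'⟩ h
    simp only [Subtype.mk.injEq] at h
    refine Subtype.ext ?_
    ext y
    obtain ⟨x, rfl⟩ := hρ y
    change ρ x ∈ R ↔ ρ x ∈ R'
    rw [← Subring.mem_comap, ← Subring.mem_comap, h]

lemma core_count {n : ℕ} (hn : n ≤ 5) {p : ℕ} (hp : p.Prime) {k : ℕ} (hk2 : 2 ≤ k) :
    subringCount n (p^k) * p^(max 2 (k/10)) ≤ 120 * ((k+1)^30 * (C0 * p^k)) := by
  have hr : 0 < p^k := pow_pos hp.pos k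
  have hfin : {R : Subring V5 | R.toAddSubgroup.index = p^k}.Finite := finite_subrings 5 hr
  have h1 := core_bound hp hk2 hfin.toFinset (fun R hR => by simpa using hR)
  rw [← Set.ncard_eq_toFinset_card _ hfin, ← Nat.card_coe_set_eq] at h1
  exact le_trans (Nat.mul_le_mul_right _ (count_mono hn hr)) h1

/-- colon subring -/
def colon (R : Subring (Fin n → ℤ)) (a b : ℕ) (hab : Nat.Coprime a b)
    (h : R.toAddSubgroup.index = a * b) : Subring (Fin n → ℤ) where
  carrier := {x | b • x ∈ R}
  mul_mem' := by
    intro x y hx hy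
    simp only [Set.mem_setOf_eq] at *
    obtain ⟨u, v, huv⟩ := Nat.isCoprime_iff_coprime.mpr hab
    have h1 : b • (x * y) = u • ((a * b) • (x * y)) + v • ((b • x) * (b • y)) := by
      funext i
      simp only [Pi.smul_apply, Pi.mul_apply, Pi.add_apply, smul_eq_mul, nsmul_eq_mul, Nat.cast_mul]
      linear_combination (-(b * x i * y i) : ℤ) * huv
    rw [h1]
    exact R.add_mem (R.zsmul_mem (idx_mem h _) _) (R.zsmul_mem (R.mul_mem hx hy) _)
  one_mem' := R.nsmul_mem R.one_mem b
  add_mem' := by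
    intro x y hx hy
    simp only [Set.mem_setOf_eq, smul_add] at *
    exact R.add_mem hx hy
  zero_mem' := by simp
  neg_mem' := by
    intro x hx
    simp only [Set.mem_setOf_eq, smul_neg] at *
    exact R.neg_mem hx

lemma mem_colon {R : Subring (Fin n → ℤ)} {a b : ℕ} {hab : Nat.Coprime a b}
    {h : R.toAddSubgroup.index = a * b} {x : Fin n → ℤ} : x ∈ colon R a b hab h ↔ b • x ∈ R := Iff.rfl

lemma le_colon {R : Subring (Fin n → ℤ)} {a b : ℕ} {hab : Nat.Coprime a b}
    {h : R.toAddSubgroup.index = a * b} : R ≤ colon R a b hab h := fun _ hx => R.nsmul_mem hx b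

lemma cop_mem {R : Subring (Fin n → ℤ)} {a b : ℕ} (hab : Nat.Coprime a b) {x : Fin n → ℤ}
    (ha : a • x ∈ R) (hb : b • x ∈ R) : x ∈ R := by
  obtain ⟨u, v, huv⟩ := Nat.isCoprime_iff_coprime.mpr hab
  have h1 : x = u • (a • x) + v • (b • x) := by
    funext i
    simp only [Pi.smul_apply, Pi.add_apply]
    simp only [smul_eq_mul, nsmul_eq_mul]
    linear_combination (-(x i) : ℤ) * huv
  rw [h1]
  exact R.add_mem (R.zsmul_mem ha _) (R.zsmul_mem hb _)

lemma colon_dvd {R : Subring (Fin n → ℤ)} {a b : ℕ} (ha : 0 < a) (hb : 0 < b) (hab : Nat.Coprime a b)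
    (h : R.toAddSubgroup.index = a * b) : (colon R a b hab h).toAddSubgroup.index ∣ a := by
  set S := colon R a b hab h with hS
  have h1 : S.toAddSubgroup.index ∣ a * b := by
    have hle : R.toAddSubgroup ≤ S.toAddSubgroup := le_colon (hab := hab) (h := h)
    rw [← h]; exact AddSubgroup.index_dvd_of_le hle
  refine Nat.Coprime.dvd_of_dvd_mul_right ?_ h1
  refine Nat.Coprime.symm (Nat.coprime_of_dvd ?_)
  intro q hq hqb hqS
  have : Fact q.Prime := ⟨hq⟩
  have hne : S.toAddSubgroup.index ≠ 0 := fun h0 => by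
    rw [h0, zero_dvd_iff] at h1
    exact (Nat.mul_pos ha hb).ne' h1
  have : Finite ((Fin n → ℤ) ⧸ S.toAddSubgroup) := Nat.finite_of_card_ne_zero hne
  obtain ⟨y, hy⟩ := exists_prime_addOrderOf_dvd_card' (G := (Fin n → ℤ) ⧸ S.toAddSubgroup) q hqS
  obtain ⟨x, rfl⟩ := QuotientAddGroup.mk_surjective y
  have h2 : a • (x : (Fin n → ℤ) ⧸ S.toAddSubgroup) = 0 := by
    rw [← QuotientAddGroup.mk_nsmul, QuotientAddGroup.eq_zero_iff]
    change a • x ∈ S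
    rw [hS, mem_colon, smul_smul, mul_comm]
    exact idx_mem h x
  have h3 := addOrderOf_dvd_iff_nsmul_eq_zero.mpr h2
  rw [hy] at h3
  exact Nat.not_coprime_of_dvd_of_dvd hq.one_lt h3 hqb hab

lemma index_inf_mul {S T : Subring (Fin n → ℤ)} {a b : ℕ} (ha : 0 < a) (hb : 0 < b)
    (hab : Nat.Coprime a b) (hS : S.toAddSubgroup.index = a) (hT : T.toAddSubgroup.index = b) :
    (S ⊓ T).toAddSubgroup.index = a * b := by
  have e : (S ⊓ T).toAddSubgroup = S.toAddSubgroup ⊓ T.toAddSubgroup := rfl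
  rw [e]
  have h1 : a ∣ (S.toAddSubgroup ⊓ T.toAddSubgroup).index := by
    nth_rw 1 [← hS]; exact AddSubgroup.index_dvd_of_le inf_le_left
  have h2 : b ∣ (S.toAddSubgroup ⊓ T.toAddSubgroup).index := by
    nth_rw 1 [← hT]; exact AddSubgroup.index_dvd_of_le inf_le_right
  have h3 := AddSubgroup.index_inf_le (H := S.toAddSubgroup) (K := T.toAddSubgroup)
  rw [hS, hT] at h3
  have h4 : (S.toAddSubgroup ⊓ T.toAddSubgroup).index ≠ 0 :=
    AddSubgroup.index_inf_ne_zero (by rw [hS]; exact ha.ne') (by rw [hT]; exact hb.ne')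
  exact le_antisymm h3 (Nat.le_of_dvd (Nat.pos_of_ne_zero h4) (hab.mul_dvd_of_dvd_of_dvd h1 h2))

lemma recover {S T : Subring (Fin n → ℤ)} {a b : ℕ} (hab : Nat.Coprime a b)
    (hS : S.toAddSubgroup.index = a) (hT : T.toAddSubgroup.index = b) (x : Fin n → ℤ) :
    x ∈ S ↔ b • x ∈ S ⊓ T := by
  constructor
  · intro h; exact ⟨S.nsmul_mem h b, idx_mem hT x⟩
  · intro h; exact cop_mem hab (idx_mem hS x) h.1

lemma count_mul (n : ℕ) {a b : ℕ} (ha : 0 < a) (hb : 0 < b) (hab : Nat.Coprime a b) :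
    subringCount n (a * b) = subringCount n a * subringCount n b := by
  unfold subringCount
  rw [← Nat.card_prod]
  symm
  refine Nat.card_eq_of_bijective (fun ST => ⟨ST.1.1 ⊓ ST.2.1, index_inf_mul ha hb hab ST.1.2 ST.2.2⟩)
    ⟨?_, ?_⟩
  · rintro ⟨⟨S, hS⟩, ⟨T, hT⟩⟩ ⟨⟨S', hS'⟩, ⟨T', hT'⟩⟩ h
    simp only [Subtype.mk.injEq] at h
    have e1 : S = S' := by
      ext x; rw [recover hab hS hT, recover hab hS' hT', h]
    have e2 : T = T' := by
      ext x; rw [recover hab.symm hT hS, recover hab.symm hT' hS', inf_comm, h, inf_comm]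
    subst e1; subst e2; rfl
  · rintro ⟨R, hR⟩
    have hR' : R.toAddSubgroup.index = b * a := by rw [hR, mul_comm]
    have hinf : colon R a b hab hR ⊓ colon R b a hab.symm hR' = R := by
      ext x; constructor
      · rintro ⟨h1, h2⟩; exact cop_mem hab (mem_colon.mp h2) (mem_colon.mp h1)
      · intro h; exact ⟨le_colon h, le_colon h⟩
    have d1 := colon_dvd ha hb hab hR
    have d2 := colon_dvd hb ha hab.symm hR'
    have le := AddSubgroup.index_inf_le (H := (colon R a b hab hR).toAddSubgroup)
      (K := (colon R b a hab.symm hR').toAddSubgroup)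
    have e : (colon R a b hab hR).toAddSubgroup ⊓ (colon R b a hab.symm hR').toAddSubgroup
      = R.toAddSubgroup := by
      conv_rhs => rw [← hinf]
      rfl
    rw [e, hR] at le
    have l1 := Nat.le_of_dvd ha d1
    have l2 := Nat.le_of_dvd hb d2
    have i1 : (colon R a b hab hR).toAddSubgroup.index = a := by nlinarith
    have i2 : (colon R b a hab.symm hR').toAddSubgroup.index = b := by nlinarith
    exact ⟨(⟨_, i1⟩, ⟨_, i2⟩), Subtype.ext hinf⟩

def EE (p : ℕ) (i j : Fin n) : Subring (Fin n → ℤ) where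
  carrier := {x | (p:ℤ) ∣ x i - x j}
  mul_mem' := by
    intro x y hx hy
    simp only [Set.mem_setOf_eq, Pi.mul_apply] at *
    have := dvd_add (hx.mul_right (y i)) (hy.mul_left (x j))
    rwa [show x i * y i - x j * y j = (x i - x j) * y i + x j * (y i - y j) by ring]
  one_mem' := by simp
  add_mem' := by
    intro x y hx hy
    simp only [Set.mem_setOf_eq, Pi.add_apply] at *
    rw [show x i + y i - (x j + y j) = (x i - x j) + (y i - y j) by ring]
    exact dvd_add hx hy
  zero_mem' := by simp
  neg_mem' := by
    intro x hx
    simp only [Set.mem_setOf_eq, Pi.neg_apply] at *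
    rw [show -x i - -x j = -(x i - x j) by ring]
    exact hx.neg_right

lemma mem_EE {p : ℕ} {i j : Fin n} {x : Fin n → ℤ} : x ∈ EE p i j ↔ (p:ℤ) ∣ x i - x j := Iff.rfl

lemma index_EE {p : ℕ} {i j : Fin n} (hij : i ≠ j) : (EE p i j).toAddSubgroup.index = p := by
  let φ : (Fin n → ℤ) →+ ZMod p :=
    { toFun := fun x => ((x i - x j : ℤ) : ZMod p)
      map_zero' := by simp
      map_add' := by intro x y; simp; ring }
  have hφ : Function.Surjective φ := by
    intro y
    obtain ⟨z, rfl⟩ := ZMod.intCast_surjective y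
    refine ⟨Pi.single i z, ?_⟩
    change (((Pi.single i z : Fin n → ℤ) i - (Pi.single i z : Fin n → ℤ) j : ℤ) : ZMod p) = _
    simp [hij.symm]
  have e : (EE p i j).toAddSubgroup = φ.ker := by
    ext x
    exact (ZMod.intCast_zmod_eq_zero_iff_dvd _ _).symm
  rw [e, AddSubgroup.index_ker, AddMonoidHom.range_eq_top.mpr hφ,
    Nat.card_congr AddSubgroup.topEquiv.toEquiv, Nat.card_zmod]

lemma exists_EE {p : ℕ} (hp : p.Prime) {R : Subring (Fin n → ℤ)} (hR : R.toAddSubgroup.index = p) :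
    ∃ i j : Fin n, i < j ∧ EE p i j = R := by
  classical
  have hpi := Nat.prime_iff_prime_int.mp hp
  have hle : ∃ i j : Fin n, i < j ∧ R ≤ EE p i j := by
    by_contra hcon
    push Not at hcon
    have h1 : ∀ i j : Fin n, ∃ x ∈ R, i ≠ j → ¬ (p:ℤ) ∣ x i - x j := by
      intro i j
      rcases lt_trichotomy i j with h | h | h
      · obtain ⟨x, hx, hx'⟩ := SetLike.not_le_iff_exists.mp (hcon i j h)
        exact ⟨x, hx, fun _ => hx'⟩
      · exact ⟨0, R.zero_mem, fun h' => absurd h h'⟩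
      · obtain ⟨x, hx, hx'⟩ := SetLike.not_le_iff_exists.mp (hcon j i h)
        refine ⟨x, hx, fun _ hd => hx' ?_⟩
        rw [mem_EE, ← dvd_neg, neg_sub]; exact hd
    choose x hx hx' using h1
    have h2 : ∀ i : Fin n, Pi.single i (1:ℤ) ∈ R := by
      intro i
      let y : Fin n → ℤ := ∏ j ∈ Finset.univ.erase i, (x i j - (x i j j) • (1 : Fin n → ℤ))
      have hy : y ∈ R := R.prod_mem fun j _ => R.sub_mem (hx i j) (R.zsmul_mem R.one_mem _)
      have hyl : ∀ l, l ≠ i → y l = 0 := by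
        intro l hl
        simp only [y, Finset.prod_apply]
        exact Finset.prod_eq_zero (Finset.mem_erase.mpr ⟨hl, Finset.mem_univ l⟩) (by simp)
      have hyi : ¬ (p:ℤ) ∣ y i := by
        simp only [y, Finset.prod_apply]
        rw [hpi.dvd_finset_prod_iff]
        rintro ⟨j, hj, hd⟩
        refine hx' i j (Finset.mem_erase.mp hj).1.symm ?_
        simpa using hd
      obtain ⟨u, v, huv⟩ := (hpi.coprime_iff_not_dvd).mpr hyi
      have e : Pi.single i (1:ℤ) = u • (p • (Pi.single i (1:ℤ) : Fin n → ℤ)) + v • y := by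
        funext l
        by_cases hl : l = i
        · subst hl; simp; linarith
        · simp [hl, hyl l hl]
      rw [e]
      exact R.add_mem (R.zsmul_mem (idx_mem hR _) _) (R.zsmul_mem hy _)
    have h3 : R.toAddSubgroup = ⊤ := by
      rw [eq_top_iff]
      intro z _
      have : z = ∑ i, z i • (Pi.single i (1:ℤ) : Fin n → ℤ) := by
        rw [pi_eq_sum_univ' z]
        simp [Pi.single_apply]
      change z ∈ R
      rw [this]
      exact R.sum_mem fun i _ => R.zsmul_mem (h2 i) _
    rw [h3, AddSubgroup.index_top] at hR
    exact hp.one_lt.ne hR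
  obtain ⟨i, j, hij, h⟩ := hle
  refine ⟨i, j, hij, ?_⟩
  have h1 : R.toAddSubgroup ≤ (EE p i j).toAddSubgroup := h
  have h2 := AddSubgroup.relIndex_mul_index h1
  rw [index_EE hij.ne, hR] at h2
  have h3 : R.toAddSubgroup.relIndex (EE p i j).toAddSubgroup = 1 :=
    Nat.eq_of_mul_eq_mul_right hp.pos (by rw [h2, one_mul])
  exact le_antisymm (AddSubgroup.relIndex_eq_one.mp h3) h

lemma count_prime (h2 : 2 ≤ n) (h5 : n ≤ 5) {p : ℕ} (hp : p.Prime) :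
    subringCount n p = n * (n - 1) / 2 := by
  have h1 : Nat.card {t : Fin n × Fin n // t.1 < t.2} = n * (n-1)/2 := by
    rw [Nat.card_eq_fintype_card]
    interval_cases n <;> decide
  rw [← h1, subringCount]
  symm
  refine Nat.card_eq_of_bijective (fun t => ⟨EE p t.1.1 t.1.2, index_EE t.2.ne⟩) ⟨?_, ?_⟩
  · rintro ⟨⟨i, j⟩, hij⟩ ⟨⟨i', j'⟩, hij'⟩ h
    simp only [Subtype.mk.injEq] at h hij hij'
    have key : ∀ l, l = i' ∨ l = j' → l = i ∨ l = j := by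
      intro l hl
      by_contra hcon
      push Not at hcon
      have m1 : (Pi.single l (1:ℤ) : Fin n → ℤ) ∈ EE p i j := by
        rw [mem_EE, Pi.single_eq_of_ne hcon.1.symm, Pi.single_eq_of_ne hcon.2.symm]; simp
      rw [h, mem_EE] at m1
      have hp1 : ¬ (p:ℤ) ∣ 1 := fun hd => by
        have := Int.isUnit_iff.mp (isUnit_of_dvd_one hd)
        have h2 := hp.two_le
        omega
      rcases hl with rfl | rfl
      · rw [Pi.single_eq_same, Pi.single_eq_of_ne hij'.ne'] at m1
        exact hp1 (by simpa using m1)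
      · rw [Pi.single_eq_same, Pi.single_eq_of_ne hij'.ne] at m1
        exact hp1 (by simpa using m1)
    have a1 := key i' (Or.inl rfl)
    have a2 := key j' (Or.inr rfl)
    have : i = i' ∧ j = j' := by
      rcases a1 with rfl | rfl <;> rcases a2 with rfl | rfl
      · exact absurd hij' (lt_irrefl _)
      · exact ⟨rfl, rfl⟩
      · exact absurd (hij.trans hij') (lt_irrefl _)
      · exact absurd hij' (lt_irrefl _)
    obtain ⟨rfl, rfl⟩ := this
    rfl
  · rintro ⟨R, hR⟩
    obtain ⟨i, j, hij, h⟩ := exists_EE hp hR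
    exact ⟨⟨(i, j), hij⟩, Subtype.ext h⟩

end
end SubringAsymp

end

section

namespace SubringAsymp

open Filter Topology Finset

/-- summatory function with real argument -/
noncomputable def SF (a : ArithmeticFunction ℝ) (y : ℝ) : ℝ := ∑ m ∈ Ioc 0 ⌊y⌋₊, a m

lemma SF_zeta_mul (a : ArithmeticFunction ℝ) (x : ℝ) :
    SF ((ArithmeticFunction.zeta : ArithmeticFunction ℝ) * a) x
      = ∑ m ∈ Ioc 0 ⌊x⌋₊, SF a (x / m) := by
  rw [SF, ArithmeticFunction.sum_Ioc_mul_eq_sum_sum]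
  refine sum_congr rfl fun m hm => ?_
  rw [SF, Nat.floor_div_natCast]
  have : m ≠ 0 := by simp at hm; omega
  simp [ArithmeticFunction.natCoe_apply, ArithmeticFunction.zeta_apply, this]

lemma pow_sub_bounds {u v : ℝ} (hv : 0 ≤ v) (huv : v ≤ u) (j : ℕ) :
    (j + 1) * v ^ j * (u - v) ≤ u ^ (j + 1) - v ^ (j + 1) ∧
    u ^ (j + 1) - v ^ (j + 1) ≤ (j + 1) * u ^ j * (u - v) := by
  have hu : 0 ≤ u := hv.trans huv
  have h := Commute.geom_sum₂_mul (Commute.all u v) (j + 1)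
  rw [← h]
  constructor
  · refine mul_le_mul_of_nonneg_right ?_ (by linarith)
    calc ((j:ℝ) + 1) * v ^ j = ∑ i ∈ range (j + 1), v ^ j := by simp
      _ ≤ _ := by
        refine sum_le_sum fun i hi => ?_
        have : i + (j + 1 - 1 - i) = j := by simp at hi; omega
        calc v ^ j = v ^ i * v ^ (j + 1 - 1 - i) := by rw [← pow_add, this]
          _ ≤ _ := by gcongr
  · refine mul_le_mul_of_nonneg_right ?_ (by linarith)
    calc _ ≤ ∑ i ∈ range (j + 1), u ^ j := by
          refine sum_le_sum fun i hi => ?_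
          have : i + (j + 1 - 1 - i) = j := by simp at hi; omega
          calc _ ≤ u ^ i * u ^ (j + 1 - 1 - i) := by gcongr
            _ = u ^ j := by rw [← pow_add, this]
      _ = _ := by simp

lemma log_step {m : ℕ} (hm : 0 < m) :
    1 / ((m:ℝ) + 1) ≤ Real.log (m + 1) - Real.log m ∧ Real.log (m + 1) - Real.log m ≤ 1 / (m:ℝ) := by
  have hm' : (0:ℝ) < m := by exact_mod_cast hm
  rw [← Real.log_div (by positivity) (by positivity)]
  constructor
  · have := Real.one_sub_inv_le_log_of_pos (x := ((m:ℝ) + 1) / m) (by positivity)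
    refine le_trans (le_of_eq ?_) this
    field_simp; ring
  · have := Real.log_le_sub_one_of_pos (x := ((m:ℝ) + 1) / m) (by positivity)
    refine le_trans this (le_of_eq ?_)
    field_simp; ring

/-- the sums `∑ log^j (x/m) / m` -/
noncomputable def LS (j : ℕ) (x : ℝ) (N : ℕ) : ℝ := ∑ m ∈ Ioc 0 N, Real.log (x / m) ^ j / m

lemma LS_succ (j : ℕ) (x : ℝ) (N : ℕ) :
    LS j x (N + 1) = LS j x N + Real.log (x / (N + 1)) ^ j / (N + 1) := by
  unfold LS
  rw [← insert_Ioc_right_eq_Ioc_add_one (by omega), sum_insert (by simp)]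
  push_cast; ring

lemma LS_aux (j : ℕ) {x : ℝ} (N : ℕ) (hN : 1 ≤ N) (hx : (N:ℝ) + 1 ≤ x) :
    Real.log (x / (N + 1)) ^ j / (N + 1) ≤
      (Real.log (x / N) ^ (j + 1) - Real.log (x / (N + 1)) ^ (j + 1)) / (j + 1) ∧
    (Real.log (x / N) ^ (j + 1) - Real.log (x / (N + 1)) ^ (j + 1)) / (j + 1) ≤
      Real.log (x / N) ^ j / N := by
  have hN0 : (0:ℝ) < N := by exact_mod_cast hN
  have hx0 : 0 < x := by linarith
  have hv : 0 ≤ Real.log (x / (N + 1)) := Real.log_nonneg (by rw [le_div_iff₀ (by positivity)]; linarith)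
  have hd : Real.log (x / N) - Real.log (x / (N + 1)) = Real.log (N + 1) - Real.log N := by
    rw [Real.log_div hx0.ne' hN0.ne', Real.log_div hx0.ne' (by positivity)]; ring
  obtain ⟨d1, d2⟩ := log_step hN
  have hdp : 0 ≤ 1 / ((N:ℝ) + 1) := by positivity
  have hu : Real.log (x / (N + 1)) ≤ Real.log (x / N) := by linarith
  obtain ⟨b1, b2⟩ := pow_sub_bounds hv hu j
  rw [hd] at b1 b2
  constructor
  · rw [le_div_iff₀ (by positivity)]
    refine le_trans ?_ b1
    calc _ = (j + 1) * Real.log (x / (N + 1)) ^ j * (1 / ((N:ℝ) + 1)) := by ring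
      _ ≤ _ := by gcongr
  · rw [div_le_iff₀ (by positivity)]
    refine le_trans b2 ?_
    have : 0 ≤ Real.log (x / N) := hv.trans hu
    calc _ ≤ (j + 1) * Real.log (x / N) ^ j * (1 / (N:ℝ)) := by gcongr
      _ = _ := by ring

lemma LS_upper (j : ℕ) {x : ℝ} (N : ℕ) (hN : 1 ≤ N) (hx : (N:ℝ) ≤ x) :
    LS j x N ≤ (Real.log x ^ (j + 1) - Real.log (x / N) ^ (j + 1)) / (j + 1) + Real.log x ^ j := by
  induction N, hN using Nat.le_induction with
  | base => simp [LS]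
  | succ N hN ih =>
    push_cast at hx
    have i2 := ih (by linarith)
    rw [LS_succ]
    have := (LS_aux j N hN hx).1
    push_cast
    rw [sub_div] at *
    linarith

lemma LS_lower (j : ℕ) {x : ℝ} (N : ℕ) (hx : (N:ℝ) + 1 ≤ x) :
    (Real.log x ^ (j + 1) - Real.log (x / (N + 1)) ^ (j + 1)) / (j + 1) ≤ LS j x N := by
  induction N with
  | zero => simp [LS]
  | succ N ih =>
    push_cast at hx
    have i2 := ih (by linarith)
    rw [LS_succ]
    have := (LS_aux j (x := x) (N + 1) (by omega) (by push_cast; linarith)).2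
    push_cast at *
    rw [sub_div] at *
    linarith

lemma LS_bounds (j : ℕ) {x : ℝ} (hx : 1 ≤ x) :
    (Real.log x ^ (j + 1) - 1) / (j + 1) ≤ LS j x ⌊x⌋₊ ∧
    LS j x ⌊x⌋₊ ≤ Real.log x ^ (j + 1) / (j + 1) + Real.log x ^ j := by
  have h1 : 1 ≤ ⌊x⌋₊ := Nat.le_floor (by simpa using hx)
  have h2 : (⌊x⌋₊ : ℝ) ≤ x := Nat.floor_le (by linarith)
  have h3 : x < ⌊x⌋₊ + 1 := Nat.lt_floor_add_one x
  obtain ⟨N, hN⟩ : ∃ N, ⌊x⌋₊ = N + 1 := ⟨⌊x⌋₊ - 1, by omega⟩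
  rw [hN] at h1 h2 h3 ⊢
  have hu0 : 0 ≤ Real.log (x / (N + 1)) :=
    Real.log_nonneg (by rw [le_div_iff₀ (by positivity)]; push_cast at h2; linarith)
  have hu1 : Real.log (x / (N + 1)) ≤ 1 := by
    have hN0 : (0:ℝ) ≤ N := by positivity
    have := Real.log_le_sub_one_of_pos (x := x / (N + 1)) (by positivity)
    refine this.trans ?_
    rw [sub_le_iff_le_add, div_le_iff₀ (by positivity)]
    push_cast at h3; linarith
  have hp0 := pow_nonneg hu0 (j + 1)
  have hp1 := pow_le_one₀ (n := j + 1) hu0 hu1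
  constructor
  · have := LS_lower j N (by exact_mod_cast h2 : (N:ℝ) + 1 ≤ x)
    refine (le_trans ?_ this).trans ?_
    · gcongr
    · rw [LS_succ]
      have : 0 ≤ Real.log (x / (N + 1)) ^ j / (N + 1) := by positivity
      linarith
  · refine (LS_upper j (N + 1) h1 h2).trans ?_
    push_cast
    have : (Real.log x ^ (j + 1) - Real.log (x / (N + 1)) ^ (j + 1)) / ((j:ℝ) + 1) ≤ Real.log x ^ (j + 1) / (j + 1) := by
      gcongr; linarith
    linarith

lemma LS_tendsto (j : ℕ) :
    Tendsto (fun x : ℝ => LS j x ⌊x⌋₊ / Real.log x ^ (j + 1)) atTop (𝓝 (1 / (j + 1))) := by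
  have hlog := Real.tendsto_log_atTop
  have hinv : Tendsto (fun x : ℝ => (Real.log x)⁻¹) atTop (𝓝 0) := hlog.inv_tendsto_atTop
  have hl : Tendsto (fun x : ℝ => (1 - (Real.log x)⁻¹ ^ (j + 1)) / ((j:ℝ) + 1)) atTop (𝓝 (1 / (j + 1))) := by
    have := ((hinv.pow (j + 1)).const_sub 1).div_const ((j:ℝ) + 1)
    simpa using this
  have hu : Tendsto (fun x : ℝ => 1 / ((j:ℝ) + 1) + (Real.log x)⁻¹) atTop (𝓝 (1 / (j + 1))) := by
    simpa using hinv.const_add (1 / ((j:ℝ) + 1))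
  refine tendsto_of_tendsto_of_tendsto_of_le_of_le' hl hu ?_ ?_
  · filter_upwards [eventually_ge_atTop 1, hlog.eventually_gt_atTop 0] with x hx hx'
    rw [le_div_iff₀ (by positivity)]
    refine (le_of_eq ?_).trans (LS_bounds j hx).1
    have : (Real.log x)⁻¹ ^ (j + 1) * Real.log x ^ (j + 1) = 1 := by
      rw [← mul_pow, inv_mul_cancel₀ hx'.ne', one_pow]
    rw [div_mul_eq_mul_div, sub_mul, this, one_mul]
  · filter_upwards [eventually_ge_atTop 1, hlog.eventually_gt_atTop 0] with x hx hx'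
    rw [div_le_iff₀ (by positivity)]
    refine (LS_bounds j hx).2.trans (le_of_eq ?_)
    field_simp
    ring

lemma SF_abs_le (a : ArithmeticFunction ℝ) {y Y : ℝ} (h : y ≤ Y) :
    |SF a y| ≤ ∑ m ∈ Ioc 0 ⌊Y⌋₊, |a m| := by
  refine (abs_sum_le_sum_abs _ _).trans ?_
  refine sum_le_sum_of_subset_of_nonneg ?_ fun _ _ _ => abs_nonneg _
  exact Ioc_subset_Ioc_right (Nat.floor_le_floor h)

lemma SF_approx (a : ArithmeticFunction ℝ) (j : ℕ) (c : ℝ)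
    (h : Tendsto (fun y : ℝ => SF a y / (y * Real.log y ^ j)) atTop (𝓝 c)) {ε : ℝ} (hε : 0 < ε) :
    ∃ D, 0 ≤ D ∧ ∀ y, 1 ≤ y → |SF a y - c * (y * Real.log y ^ j)| ≤ ε * (y * Real.log y ^ j) + D := by
  have h1 := (Metric.tendsto_nhds.mp h) ε hε
  obtain ⟨Y, hY⟩ := eventually_atTop.mp (h1.and (eventually_gt_atTop 1))
  have hY1 : 1 < Y := (hY Y le_rfl).2
  have hLY : 0 ≤ Real.log Y := Real.log_nonneg hY1.le
  refine ⟨∑ m ∈ Ioc 0 ⌊Y⌋₊, |a m| + |c| * (Y * Real.log Y ^ j),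
    add_nonneg (sum_nonneg fun _ _ => abs_nonneg _) (by positivity), fun y hy => ?_⟩
  have hL : 0 ≤ Real.log y := Real.log_nonneg hy
  by_cases hyY : Y ≤ y
  · obtain ⟨h2, h3⟩ := hY y hyY
    have hLp : 0 < y * Real.log y ^ j := by have := Real.log_pos h3; positivity
    have : |SF a y - c * (y * Real.log y ^ j)| ≤ ε * (y * Real.log y ^ j) := by
      rw [Real.dist_eq] at h2
      have e : SF a y - c * (y * Real.log y ^ j) = (SF a y / (y * Real.log y ^ j) - c) * (y * Real.log y ^ j) := by
        rw [sub_mul, div_mul_cancel₀ _ hLp.ne']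
      rw [e, abs_mul, abs_of_pos hLp]
      gcongr
    have h4 : 0 ≤ ∑ m ∈ Ioc 0 ⌊Y⌋₊, |a m| + |c| * (Y * Real.log Y ^ j) :=
      add_nonneg (sum_nonneg fun _ _ => abs_nonneg _) (by positivity)
    linarith
  · push Not at hyY
    have h2 := SF_abs_le a hyY.le
    have h3 : |c * (y * Real.log y ^ j)| ≤ |c| * (Y * Real.log Y ^ j) := by
      rw [abs_mul, abs_of_nonneg (a := y * Real.log y ^ j) (by positivity)]
      have : Real.log y ≤ Real.log Y := Real.log_le_log (by linarith) hyY.le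
      gcongr
    have h4 : 0 ≤ ε * (y * Real.log y ^ j) := by positivity
    have := abs_sub (SF a y) (c * (y * Real.log y ^ j))
    linarith

lemma SF_step (a : ArithmeticFunction ℝ) (j : ℕ) (c : ℝ)
    (h : Tendsto (fun y : ℝ => SF a y / (y * Real.log y ^ j)) atTop (𝓝 c)) :
    Tendsto (fun y : ℝ => SF ((ArithmeticFunction.zeta : ArithmeticFunction ℝ) * a) y
      / (y * Real.log y ^ (j + 1))) atTop (𝓝 (c / (j + 1))) := by
  have hlog := Real.tendsto_log_atTop
  have hLS := LS_tendsto j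
  have hmain : Tendsto (fun x : ℝ => c * (LS j x ⌊x⌋₊ / Real.log x ^ (j + 1))) atTop (𝓝 (c / (j + 1))) := by
    have := hLS.const_mul c
    rwa [mul_one_div] at this
  have hdiff : Tendsto (fun x : ℝ => SF ((ArithmeticFunction.zeta : ArithmeticFunction ℝ) * a) x
      / (x * Real.log x ^ (j + 1)) - c * (LS j x ⌊x⌋₊ / Real.log x ^ (j + 1))) atTop (𝓝 0) := by
    rw [Metric.tendsto_nhds]
    intro ε hε
    obtain ⟨D, hD0, hD⟩ := SF_approx a j c h (ε := ε / 4) (by positivity)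
    have hz : Tendsto (fun x : ℝ => D * (Real.log x)⁻¹ ^ (j + 1)) atTop (𝓝 0) := by
      simpa using (hlog.inv_tendsto_atTop.pow (j + 1)).const_mul D
    have hone : (1 / ((j:ℝ) + 1)) < 2 := by
      rw [div_lt_iff₀ (by positivity)]
      have : (0:ℝ) ≤ j := by positivity
      linarith
    filter_upwards [eventually_ge_atTop 1, hlog.eventually_gt_atTop 0, hz.eventually_lt_const (show (0:ℝ) < ε / 2 by positivity),
      hLS.eventually_lt_const hone] with x hx hx' h2 h3
    rw [Real.dist_eq, sub_zero]
    have hX : 0 < x * Real.log x ^ (j + 1) := by positivity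
    have e : SF ((ArithmeticFunction.zeta : ArithmeticFunction ℝ) * a) x - c * (x * LS j x ⌊x⌋₊)
        = ∑ m ∈ Ioc 0 ⌊x⌋₊, (SF a (x / m) - c * (x / m * Real.log (x / m) ^ j)) := by
      rw [SF_zeta_mul, sum_sub_distrib, LS, mul_sum, mul_sum]
      congr 1
      refine sum_congr rfl fun m _ => by ring
    have hb : |SF ((ArithmeticFunction.zeta : ArithmeticFunction ℝ) * a) x - c * (x * LS j x ⌊x⌋₊)|
        ≤ ε / 4 * (x * LS j x ⌊x⌋₊) + D * x := by
      rw [e]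
      refine (abs_sum_le_sum_abs _ _).trans ?_
      calc _ ≤ ∑ m ∈ Ioc 0 ⌊x⌋₊, (ε / 4 * (x / m * Real.log (x / m) ^ j) + D) := by
            refine sum_le_sum fun m hm => hD _ ?_
            have hm' := mem_Ioc.mp hm
            have h0 : (0:ℝ) < m := by exact_mod_cast hm'.1
            rw [le_div_iff₀ h0, one_mul]
            exact (Nat.le_floor_iff (by linarith)).mp hm'.2
        _ = ε / 4 * (x * LS j x ⌊x⌋₊) + D * ⌊x⌋₊ := by
            rw [sum_add_distrib, LS, mul_sum, mul_sum]
            congr 1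
            · refine sum_congr rfl fun m _ => by ring
            · simp [mul_comm]
        _ ≤ _ := by
            have := Nat.floor_le (by linarith : 0 ≤ x)
            gcongr
    have e2 : SF ((ArithmeticFunction.zeta : ArithmeticFunction ℝ) * a) x
      / (x * Real.log x ^ (j + 1)) - c * (LS j x ⌊x⌋₊ / Real.log x ^ (j + 1)) =
      (SF ((ArithmeticFunction.zeta : ArithmeticFunction ℝ) * a) x - c * (x * LS j x ⌊x⌋₊))
        / (x * Real.log x ^ (j + 1)) := by
      field_simp
    rw [e2, abs_div, abs_of_pos hX, div_lt_iff₀ hX]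
    refine hb.trans_lt ?_
    have h2' : D < ε / 2 * Real.log x ^ (j + 1) := by
      rw [inv_pow, ← div_eq_mul_inv, div_lt_iff₀ (by positivity)] at h2
      exact h2
    rw [div_lt_iff₀ (by positivity)] at h3
    have hx0 : 0 < x := by linarith
    have m1 := mul_lt_mul_of_pos_right h2' hx0
    have m2 := mul_lt_mul_of_pos_right h3 (by positivity : 0 < ε / 4 * x)
    nlinarith
  have := hdiff.add hmain
  simpa using this

lemma SF_base (g : ArithmeticFunction ℝ) (hg : Summable fun m : ℕ => |g m| / m) :
    Tendsto (fun y : ℝ => SF ((ArithmeticFunction.zeta : ArithmeticFunction ℝ) * g) y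
      / (y * Real.log y ^ 0)) atTop (𝓝 (∑' m : ℕ, g m / m)) := by
  have e : ∀ᶠ x : ℝ in atTop, ∑' m : ℕ, g m * (⌊x / m⌋₊ / x) =
      SF ((ArithmeticFunction.zeta : ArithmeticFunction ℝ) * g) x / (x * Real.log x ^ 0) := by
    filter_upwards [eventually_ge_atTop 1] with x hx
    rw [pow_zero, mul_one, mul_comm _ g, SF, ArithmeticFunction.sum_Ioc_mul_zeta_eq_sum, sum_div]
    rw [tsum_eq_sum (s := Ioc 0 ⌊x⌋₊)]
    · refine sum_congr rfl fun m _ => ?_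
      rw [Nat.floor_div_natCast]; ring
    · intro m hm
      rcases Nat.eq_zero_or_pos m with rfl | h0
      · simp
      · have h1 : ⌊x⌋₊ < m := by
          by_contra h; exact hm (mem_Ioc.mpr ⟨h0, by omega⟩)
        rw [Nat.floor_div_natCast, Nat.div_eq_of_lt h1]; simp
  refine Tendsto.congr' e ?_
  refine tendsto_tsum_of_dominated_convergence hg ?_ ?_
  · intro m
    rcases Nat.eq_zero_or_pos m with rfl | h0
    · simp
    have := tendsto_nat_floor_mul_div_atTop (R := ℝ) (a := 1 / (m:ℝ)) (by positivity)
    have h2 := this.const_mul (g m)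
    rw [mul_one_div] at h2
    refine h2.congr fun x => ?_
    rw [one_div_mul_eq_div]
  · filter_upwards [eventually_ge_atTop 1] with x hx m
    rcases Nat.eq_zero_or_pos m with rfl | h0
    · simp
    have hx0 : 0 < x := by linarith
    rw [Real.norm_eq_abs, abs_mul, abs_of_nonneg (a := (⌊x / m⌋₊ : ℝ) / x) (by positivity), div_eq_mul_inv |g m|]
    have hf := Nat.floor_le (by positivity : 0 ≤ x / (m:ℝ))
    have : (⌊x / m⌋₊ : ℝ) / x ≤ (m:ℝ)⁻¹ := by
      rw [div_le_iff₀ hx0]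
      refine hf.trans (le_of_eq ?_)
      ring
    gcongr

lemma SF_iter (g : ArithmeticFunction ℝ) (hg : Summable fun m : ℕ => |g m| / m) (j : ℕ) :
    Tendsto (fun y : ℝ => SF ((ArithmeticFunction.zeta : ArithmeticFunction ℝ) ^ (j + 1) * g) y
      / (y * Real.log y ^ j)) atTop (𝓝 ((∑' m : ℕ, g m / m) / j.factorial)) := by
  induction j with
  | zero => simpa using SF_base g hg
  | succ j ih =>
    have := SF_step _ j _ ih
    rw [← mul_assoc, ← pow_succ'] at this
    convert this using 2
    rw [Nat.factorial_succ, div_div]; push_cast; ring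

end SubringAsymp

end

section

namespace SubringAsymp

open Filter Topology Finset

/-- normalized prime power values -/
noncomputable def pw (f : ArithmeticFunction ℝ) (p e : ℕ) : ℝ := f (p ^ e) / (p:ℝ) ^ e

lemma zeta_moebius_cancel (f : ArithmeticFunction ℝ) :
    (ArithmeticFunction.zeta : ArithmeticFunction ℝ) * ((ArithmeticFunction.moebius : ArithmeticFunction ℝ) * f) = f := by
  rw [← mul_assoc, ArithmeticFunction.coe_zeta_mul_coe_moebius, one_mul]

lemma mob_pp (f : ArithmeticFunction ℝ) {p : ℕ} (hp : p.Prime) (e : ℕ) :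
    ((ArithmeticFunction.moebius : ArithmeticFunction ℝ) * f) (p ^ (e + 1)) = f (p ^ (e + 1)) - f (p ^ e) := by
  have h : ∀ k, f (p ^ k) = ∑ i ∈ range (k + 1), ((ArithmeticFunction.moebius : ArithmeticFunction ℝ) * f) (p ^ i) := by
    intro k
    conv_lhs => rw [← zeta_moebius_cancel f, ArithmeticFunction.coe_zeta_mul_apply]
    rw [Nat.sum_divisors_prime_pow hp]
  rw [h (e + 1), h e, sum_range_succ _ (e + 1)]; ring

lemma mob_pw (f : ArithmeticFunction ℝ) {p : ℕ} (hp : p.Prime) (e : ℕ) :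
    pw ((ArithmeticFunction.moebius : ArithmeticFunction ℝ) * f) p (e + 1) = pw f p (e + 1) - pw f p e / p := by
  have : (p:ℝ) ≠ 0 := by exact_mod_cast hp.ne_zero
  rw [pw, mob_pp f hp, pw, pw, sub_div, div_div, ← pow_succ]

/-- The inductive package. -/
structure GoodAF (f : ArithmeticFunction ℝ) (K : ℝ) : Prop where
  mult : f.IsMultiplicative
  prim : ∀ p : ℕ, p.Prime → f p = K
  summ : Summable fun x : Nat.Primes × ℕ => |pw f x.1 (x.2 + 2)|
  pos : ∀ p : ℕ, p.Prime → 0 < ∑' e, pw f p e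

lemma pw_zero {f : ArithmeticFunction ℝ} (hf : f.IsMultiplicative) (p : ℕ) : pw f p 0 = 1 := by
  simp [pw, hf.1]

lemma GoodAF.summ_p {f : ArithmeticFunction ℝ} {K : ℝ} (h : GoodAF f K) {p : ℕ} (hp : p.Prime) :
    Summable fun e => |pw f p e| := by
  rw [← summable_nat_add_iff 2]
  exact h.summ.comp_injective (i := fun e : ℕ => ((⟨p, hp⟩ : Nat.Primes), e))
    (fun a b hab => by simpa using hab)

lemma summable_primes_sq : Summable fun p : Nat.Primes => 1 / ((p:ℕ):ℝ) ^ 2 :=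
  (Real.summable_one_div_nat_pow.mpr (by norm_num : 1 < 2)).comp_injective Subtype.val_injective

lemma summable_ext0 {F : Nat.Primes × ℕ → ℝ} (h0 : Summable fun p => F (p, 0))
    (h1 : Summable fun x : Nat.Primes × ℕ => F (x.1, x.2 + 1)) : Summable F := by
  let i0 : Nat.Primes → Nat.Primes × ℕ := fun p => (p, 0)
  let i1 : Nat.Primes × ℕ → Nat.Primes × ℕ := fun x => (x.1, x.2 + 1)
  have hi0 : Function.Injective i0 := fun a b h => (Prod.ext_iff.mp h).1
  have hi1 : Function.Injective i1 := fun a b h => by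
    have := Prod.ext_iff.mp h
    exact Prod.ext this.1 (by have := this.2; simp [i1] at this; exact this)
  let F0 : Nat.Primes × ℕ → ℝ := fun x => if x.2 = 0 then F x else 0
  let F1 : Nat.Primes × ℕ → ℝ := fun x => if x.2 = 0 then 0 else F x
  have s0 : Summable F0 := by
    rw [← hi0.summable_iff]
    · exact h0
    · rintro ⟨p, e⟩ hx
      have : e ≠ 0 := by rintro rfl; exact hx ⟨p, rfl⟩
      simp [F0, this]
  have s1 : Summable F1 := by
    rw [← hi1.summable_iff]
    · exact h1
    · rintro ⟨p, e⟩ hx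
      have : e = 0 := by
        by_contra h
        exact hx ⟨(p, e - 1), by simp [i1]; omega⟩
      simp [F1, this]
  refine (s0.add s1).congr ?_
  rintro ⟨p, e⟩
  by_cases he : e = 0 <;> simp [F0, F1, he]

lemma GoodAF.step {f : ArithmeticFunction ℝ} {K : ℝ} (h : GoodAF f K) :
    GoodAF ((ArithmeticFunction.moebius : ArithmeticFunction ℝ) * f) (K - 1) where
  mult := ArithmeticFunction.isMultiplicative_moebius.intCast.mul h.mult
  prim := by
    intro p hp
    have := mob_pp f hp 0
    simp only [zero_add, pow_one, pow_zero] at this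
    rw [this, h.prim p hp, h.mult.1]
  summ := by
    have hs : Summable fun x : Nat.Primes × ℕ => |pw f x.1 (x.2 + 1)| / ((x.1:ℕ):ℝ) := by
      apply summable_ext0
      · refine (summable_primes_sq.mul_left |K|).congr fun p => ?_
        have : (0:ℝ) < ((p:ℕ):ℝ) := by exact_mod_cast p.2.pos
        simp only [pw, zero_add, pow_one]
        rw [h.prim p p.2, abs_div, abs_of_pos this]
        field_simp
      · refine Summable.of_nonneg_of_le (fun x => by positivity) (fun x => ?_) h.summ
        have : (1:ℝ) ≤ ((x.1:ℕ):ℝ) := by exact_mod_cast x.1.2.one_le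
        exact div_le_self (abs_nonneg _) this
    refine Summable.of_nonneg_of_le (fun x => abs_nonneg _) (fun x => ?_) (h.summ.add hs)
    have hx : (0:ℝ) < ((x.1:ℕ):ℝ) := by exact_mod_cast x.1.2.pos
    rw [mob_pw f x.1.2 (x.2 + 1)]
    refine (abs_sub _ _).trans ?_
    rw [abs_div, abs_of_pos hx]
  pos := by
    intro p hp
    have hm := ArithmeticFunction.isMultiplicative_moebius.intCast (R := ℝ) |>.mul h.mult
    have hs : Summable fun e => pw f p e := (h.summ_p hp).of_abs
    have hs1 : Summable fun e => pw f p (e + 1) := (summable_nat_add_iff 1).mpr hs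
    have hs2 : Summable fun e => pw f p (e + 1) - pw f p e / p := hs1.sub (hs.div_const _)
    have hs3 : Summable fun e => pw ((ArithmeticFunction.moebius : ArithmeticFunction ℝ) * f) p e := by
      rw [← summable_nat_add_iff 1]
      exact hs2.congr fun e => (mob_pw f hp e).symm
    have e1 : ∑' e, pw ((ArithmeticFunction.moebius : ArithmeticFunction ℝ) * f) p e
        = (1 - 1 / (p:ℝ)) * ∑' e, pw f p e := by
      rw [hs3.tsum_eq_zero_add, pw_zero hm]
      simp_rw [mob_pw f hp]
      rw [hs1.tsum_sub (hs.div_const _), tsum_div_const]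
      have := hs.tsum_eq_zero_add
      rw [pw_zero h.mult] at this
      rw [sub_mul, one_mul, one_div_mul_eq_div]
      linarith
    rw [e1]
    refine mul_pos ?_ (h.pos p hp)
    have : (1:ℝ) < p := by exact_mod_cast hp.one_lt
    rw [sub_pos, div_lt_one (by linarith)]
    exact this

lemma GoodAF.iter {f : ArithmeticFunction ℝ} {K : ℝ} (h : GoodAF f K) (i : ℕ) :
    GoodAF ((ArithmeticFunction.moebius : ArithmeticFunction ℝ) ^ i * f) (K - i) := by
  induction i with
  | zero => simpa using h
  | succ i ih =>
    have := ih.step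
    rw [← mul_assoc, ← pow_succ', sub_sub] at this
    exact_mod_cast this

lemma GoodAF.summ1 {g : ArithmeticFunction ℝ} (h : GoodAF g 0) :
    Summable fun x : Nat.Primes × ℕ => |pw g x.1 (x.2 + 1)| := by
  apply summable_ext0
  · refine summable_zero.congr fun p => ?_
    simp [pw, h.prim p p.2]
  · exact h.summ

lemma GoodAF.summable {g : ArithmeticFunction ℝ} (h : GoodAF g 0) : Summable fun m : ℕ => |g m| / m := by
  set G : ℕ → ℝ := fun m => |g m| / m with hG
  have hG1 : G 1 = 1 := by simp [hG, h.mult.1]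
  have hGm : ∀ {m n : ℕ}, Nat.Coprime m n → G (m * n) = G m * G n := by
    intro m n hmn
    simp only [hG, h.mult.2 hmn, abs_mul, Nat.cast_mul]
    rw [mul_div_mul_comm]
  have hGp : ∀ p e : ℕ, G (p ^ e) = |pw g p e| := by
    intro p e
    simp only [hG, pw, abs_div, Nat.cast_pow]
    rw [abs_of_nonneg (a := (p:ℝ) ^ e) (by positivity)]
  have hG0 : ∀ m, 0 ≤ G m := fun m => by positivity
  have hsp : ∀ {p : ℕ}, p.Prime → Summable fun e : ℕ => ‖G (p ^ e)‖ := by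
    intro p hp
    refine (h.summ_p hp).congr fun e => ?_
    rw [hGp, Real.norm_eq_abs, abs_abs]
  have hs1 := h.summ1
  have hE : Summable fun p : Nat.Primes => ∑' e, |pw g p (e + 1)| := hs1.prod
  refine summable_of_sum_range_le (c := Real.exp (∑' p : Nat.Primes, ∑' e, |pw g p (e + 1)|)) hG0 ?_
  intro N
  obtain ⟨k1, k2⟩ := EulerProduct.summable_and_hasSum_smoothNumbers_prod_primesBelow_tsum hG1 hGm hsp N
  have hfac : ∀ p ∈ N.primesBelow, ∑' e, G (p ^ e) = 1 + ∑' e, |pw g p (e + 1)| := by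
    intro p hp
    have hp' := Nat.prime_of_mem_primesBelow hp
    simp_rw [hGp]
    rw [(h.summ_p hp').tsum_eq_zero_add, pw_zero h.mult, abs_one]
  rw [prod_congr rfl hfac] at k2
  have b1 : ∏ p ∈ N.primesBelow, (1 + ∑' e, |pw g p (e + 1)|) ≤ 
      Real.exp (∑ p ∈ N.primesBelow, ∑' e, |pw g p (e + 1)|) :=
    Real.prod_one_add_le_exp_sum _ fun p => tsum_nonneg fun _ => abs_nonneg _
  have b2 : ∑ p ∈ N.primesBelow, ∑' e, |pw g p (e + 1)| ≤ ∑' p : Nat.Primes, ∑' e, |pw g p (e + 1)| := by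
    have : ∑ p ∈ N.primesBelow, ∑' e, |pw g p (e + 1)| = 
        ∑ p ∈ N.primesBelow.subtype Nat.Prime, ∑' e, |pw g p (e + 1)| := by
      rw [sum_subtype_of_mem (fun p => ∑' e, |pw g p (e + 1)|)]
      exact fun p hp => Nat.prime_of_mem_primesBelow hp
    rw [this]
    have hT : ∀ T : Finset Nat.Primes, ∑ p ∈ T, ∑' e, |pw g p (e + 1)| ≤
        ∑' p : Nat.Primes, ∑' e, |pw g p (e + 1)| := fun T =>
      hE.sum_le_tsum T fun _ _ => tsum_nonneg fun _ => abs_nonneg _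
    exact hT (N.primesBelow.subtype Nat.Prime)
  have b3 : ∑ m ∈ range N, G m ≤ ∑' m : N.smoothNumbers, G m := by
    rw [_root_.tsum_subtype]
    have hsum : Summable (Set.indicator (N.smoothNumbers : Set ℕ) G) := by
      rw [← summable_subtype_iff_indicator]
      exact k2.summable
    calc ∑ m ∈ range N, G m = ∑ m ∈ range N, Set.indicator (N.smoothNumbers : Set ℕ) G m := by
          refine sum_congr rfl fun m hm => ?_
          rcases Nat.eq_zero_or_pos m with rfl | h0
          · simp [hG, Set.indicator]
          · rw [Set.indicator_of_mem]
            exact Nat.mem_smoothNumbers_of_lt h0 (mem_range.mp hm)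
      _ ≤ _ := hsum.sum_le_tsum _ fun m _ => Set.indicator_nonneg (fun m _ => hG0 m) m
  rw [k2.tsum_eq] at b3
  exact b3.trans (b1.trans (Real.exp_le_exp.mpr b2))

lemma GoodAF.tsum_pos {g : ArithmeticFunction ℝ} (h : GoodAF g 0) : 0 < ∑' m : ℕ, g m / m := by
  set G : ℕ → ℝ := fun m => g m / m with hG
  have hG1 : G 1 = 1 := by simp [hG, h.mult.1]
  have hGm : ∀ {m n : ℕ}, Nat.Coprime m n → G (m * n) = G m * G n := by
    intro m n hmn
    simp only [hG, h.mult.2 hmn, Nat.cast_mul]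
    rw [mul_div_mul_comm]
  have hGp : ∀ p e : ℕ, G (p ^ e) = pw g p e := by
    intro p e
    simp only [hG, pw, Nat.cast_pow]
  have hs : Summable fun m => ‖G m‖ := h.summable.congr fun m => by
    simp [hG]
  rw [← EulerProduct.eulerProduct_tprod hG1 hGm hs (by simp [hG])]
  simp_rw [hGp]
  have hs1 := h.summ1
  have hE : Summable fun p : Nat.Primes => ∑' e, pw g p (e + 1) := hs1.of_abs.prod
  have e : ∀ p : Nat.Primes, ∑' e, pw g p e = 1 + ∑' e, pw g p (e + 1) := fun p => by
    rw [(h.summ_p p.2).of_abs.tsum_eq_zero_add, pw_zero h.mult]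
  rw [← Real.rexp_tsum_eq_tprod (fun p : Nat.Primes => h.pos p p.2)]
  · exact Real.exp_pos _
  · simp_rw [e]
    exact Real.summable_log_one_add_of_summable hE

theorem GoodAF.asymp {f : ArithmeticFunction ℝ} {K : ℕ} (hK : 1 ≤ K) (h : GoodAF f K) :
    ∃ C : ℝ, 0 < C ∧ Tendsto (fun B : ℕ => (∑ m ∈ Ioc 0 B, f m) / ((B:ℝ) * Real.log B ^ (K - 1))) atTop (𝓝 C) := by
  obtain ⟨j, rfl⟩ : ∃ j, K = j + 1 := ⟨K - 1, by omega⟩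
  have hg := h.iter (j + 1)
  rw [sub_self] at hg
  set g := (ArithmeticFunction.moebius : ArithmeticFunction ℝ) ^ (j + 1) * f with hgd
  have := SF_iter g hg.summable j
  have hfg : (ArithmeticFunction.zeta : ArithmeticFunction ℝ) ^ (j + 1) * g = f := by
    rw [hgd, ← mul_assoc, ← mul_pow, ArithmeticFunction.coe_zeta_mul_coe_moebius, one_pow, one_mul]
  rw [hfg] at this
  refine ⟨_, div_pos hg.tsum_pos (by positivity : (0:ℝ) < j.factorial), ?_⟩
  refine (this.comp tendsto_natCast_atTop_atTop).congr fun B => ?_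
  simp [SF]

end SubringAsymp

end

section

namespace SubringAsymp

open Filter Topology Finset

/-- the subring counting function as an arithmetic function -/
noncomputable def fA (n : ℕ) : ArithmeticFunction ℝ :=
  ⟨fun r => if r = 0 then 0 else (subringCount n r : ℝ), by simp⟩

lemma fA_apply (n : ℕ) {r : ℕ} (hr : r ≠ 0) : fA n r = subringCount n r := by
  simp [fA, hr]

lemma fA_nonneg (n r : ℕ) : 0 ≤ fA n r := by
  simp only [fA, ArithmeticFunction.coe_mk]; split_ifs <;> positivity

lemma fA_mult (n : ℕ) : (fA n).IsMultiplicative := by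
  refine ⟨by rw [fA_apply n one_ne_zero, count_one]; simp, ?_⟩
  intro a b hab
  by_cases ha : a = 0
  · simp [ha]
  by_cases hb : b = 0
  · simp [hb]
  rw [fA_apply n ha, fA_apply n hb, fA_apply n (mul_ne_zero ha hb),
    count_mul n (Nat.pos_of_ne_zero ha) (Nat.pos_of_ne_zero hb) hab]
  push_cast; rfl

lemma exp_bound {p : ℕ} (hp : p.Prime) (k : ℕ) :
    (p:ℝ) ^ 2 * (21 / 20 : ℝ) ^ k ≤ 8 * (p:ℝ) ^ (max 2 (k / 10)) := by
  set q := k / 10 with hq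
  have hp2 : (2:ℝ) ≤ p := by exact_mod_cast hp.two_le
  have h1 : (21 / 20 : ℝ) ^ k ≤ 2 ^ (q + 1) := by
    calc (21 / 20 : ℝ) ^ k ≤ (21 / 20 : ℝ) ^ (10 * (q + 1)) :=
          pow_le_pow_right₀ (by norm_num) (by omega)
      _ = ((21 / 20 : ℝ) ^ 10) ^ (q + 1) := by rw [pow_mul]
      _ ≤ 2 ^ (q + 1) := by
        apply pow_le_pow_left₀ (by positivity)
        norm_num
  have h2 : (2:ℝ) ^ (q + 1) ≤ 8 * 2 ^ (max 2 q - 2) := by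
    calc (2:ℝ) ^ (q + 1) ≤ 2 ^ (3 + (max 2 q - 2)) := pow_le_pow_right₀ (by norm_num) (by omega)
      _ = _ := by rw [pow_add]; norm_num
  have h3 : (2:ℝ) ^ (max 2 q - 2) ≤ (p:ℝ) ^ (max 2 q - 2) := pow_le_pow_left₀ (by norm_num) hp2 _
  have h4 : (p:ℝ) ^ (max 2 q) = (p:ℝ) ^ 2 * (p:ℝ) ^ (max 2 q - 2) := by
    rw [← pow_add]; congr 1; omega
  rw [h4]
  have h5 : (0:ℝ) ≤ (p:ℝ) ^ 2 := by positivity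
  nlinarith

lemma fA_bound {n : ℕ} (h5 : n ≤ 5) {p : ℕ} (hp : p.Prime) (e : ℕ) :
    |pw (fA n) p (e + 2)| ≤
      (1 / (p:ℝ) ^ 2) * ((960 * C0) * (((e + 3 : ℕ) : ℝ) ^ 30 * (20 / 21 : ℝ) ^ (e + 2))) := by
  have hp0 : (0:ℝ) < p := by exact_mod_cast hp.pos
  rw [pw, abs_of_nonneg (div_nonneg (fA_nonneg _ _) (by positivity)),
    fA_apply n (pow_ne_zero _ hp.ne_zero)]
  have h := core_count h5 hp (show 2 ≤ e + 2 by omega)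
  have h' : (subringCount n (p ^ (e + 2)) : ℝ) * (p:ℝ) ^ (max 2 ((e + 2) / 10)) ≤
      120 * (((e + 3 : ℕ) : ℝ) ^ 30 * (C0 * (p:ℝ) ^ (e + 2))) := by exact_mod_cast h
  have hb := exp_bound hp (e + 2)
  set s : ℝ := (subringCount n (p ^ (e + 2)) : ℝ)
  have hs : 0 ≤ s := by positivity
  set P : ℝ := (p:ℝ) ^ (max 2 ((e + 2) / 10))
  have hinv : (20 / 21 : ℝ) ^ (e + 2) = 1 / (21 / 20 : ℝ) ^ (e + 2) := by
    rw [← one_div_pow]; norm_num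
  rw [hinv]
  set t : ℝ := (21 / 20 : ℝ) ^ (e + 2)
  have ht : 0 < t := by positivity
  set u : ℝ := ((e + 3 : ℕ) : ℝ) ^ 30
  have e1 : (1 / (p:ℝ) ^ 2) * ((960 * C0) * (u * (1 / t))) = (960 * C0 * u) / ((p:ℝ) ^ 2 * t) := by
    field_simp
  rw [e1, div_le_div_iff₀ (by positivity) (by positivity)]
  calc s * ((p:ℝ) ^ 2 * t) ≤ s * (8 * P) := by gcongr
    _ = 8 * (s * P) := by ring
    _ ≤ 8 * (120 * (u * (C0 * (p:ℝ) ^ (e + 2)))) := by gcongr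
    _ = _ := by ring

lemma fA_good {n : ℕ} (h2 : 2 ≤ n) (h5 : n ≤ 5) : GoodAF (fA n) ((n * (n - 1) / 2 : ℕ) : ℝ) := by
  have hsum : Summable fun x : Nat.Primes × ℕ => |pw (fA n) x.1 (x.2 + 2)| := by
    have hg : Summable fun e : ℕ => (960 * (C0:ℝ)) * (((e + 3 : ℕ) : ℝ) ^ 30 * (20 / 21 : ℝ) ^ (e + 2)) := by
      have h1 : Summable fun k : ℕ => ((k:ℕ):ℝ) ^ 30 * (20 / 21 : ℝ) ^ k :=
        summable_pow_mul_geometric_of_norm_lt_one 30 (by rw [Real.norm_eq_abs]; norm_num [abs_of_pos])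
      have h3 := (summable_nat_add_iff 3).mpr h1
      refine (h3.mul_left (960 * (C0:ℝ) * (21 / 20))).congr fun e => ?_
      rw [pow_succ (20 / 21 : ℝ) (e + 2)]
      ring
    refine Summable.of_nonneg_of_le (fun _ => abs_nonneg _) (fun x => fA_bound h5 x.1.2 x.2) ?_
    exact Summable.mul_of_nonneg summable_primes_sq hg (fun p => by positivity) (fun e => by positivity)
  refine ⟨fA_mult n, fun p hp => ?_, hsum, fun p hp => ?_⟩
  · rw [fA_apply n hp.ne_zero, count_prime h2 h5 hp]
  · have hs : Summable fun e => pw (fA n) p e := by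
      rw [← summable_nat_add_iff 2]
      exact (hsum.comp_injective (i := fun e : ℕ => ((⟨p, hp⟩ : Nat.Primes), e))
        (fun a b hab => by simpa using hab)).of_abs
    refine hs.tsum_pos (fun e => div_nonneg (fA_nonneg _ _) (by positivity)) 0 ?_
    rw [pw_zero (fA_mult n)]
    exact one_pos

end SubringAsymp

end

theorem subring_asymptotics_small_n (n : ℕ) (h2 : 2 ≤ n) (h5 : n ≤ 5) :
    ∃ C : ℝ, 0 < C ∧
      Filter.Tendsto
        (fun B : ℕ =>
          (subringCountUpTo n B : ℝ) / ((B : ℝ) * Real.log B ^ (n * (n - 1) / 2 - 1)))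
        Filter.atTop (nhds C) := by
  have hK : 1 ≤ n * (n - 1) / 2 := by
    interval_cases n <;> norm_num
  obtain ⟨C, hC, h⟩ := SubringAsymp.GoodAF.asymp hK (SubringAsymp.fA_good h2 h5)
  refine ⟨C, hC, h.congr fun B => ?_⟩
  congr 1
  rw [subringCountUpTo, Nat.cast_sum]
  refine Finset.sum_congr ?_ fun r hr => ?_
  · ext r; simp [Finset.mem_Ioc, Finset.mem_Icc]; omega
  · exact SubringAsymp.fA_apply n (by have := Finset.mem_Ioc.mp hr; omega)
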